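/- arXiv:2603.12954 — 3 statements merged into one kernel-verified Lean document; each statement's English description precedes it below -/
import Mathlib

section
/- Let X be a metric space, μ an Ahlfors s-regular measure on X for some s ∈ (0,∞), 0 ≤ r ≤ 1 and 0 < q < ∞ with rq ≤ s, (Y,ρ) a metric space, and u ∈ B^r_{q,∞}(X,μ;Y). For α ∈ [0,∞) define D_α := { x ∈ X : limsup_{ε→0⁺} |ln ε|^α ⨍_{B_ε(x)} ⨍_{B_ε(x)} ρ(u(z),u(y))^q dμ(z) dμ(y) > 0 }. Then D_α = { x ∈ X : limsup_{n→∞} n^α ⨍_{B_{e^{−n}}(x)} ⨍_{B_{e^{−n}}(x)} ρ(u(z),u(y))^q dμ(z) dμ(y) > 0 }, and if β > 1 + α then Λ^{s−rq,β}(D_α) = 0. In particular, the Hausdorff dimension of D_α is at most s − rq. -/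
open MeasureTheory Metric Filter Set
open scoped ENNReal Topology

/-- A Borel measure `μ` on a metric space is Ahlfors `s`-regular. -/
def IsAhlfors {X : Type*} [MetricSpace X] [MeasurableSpace X]
    (μ : Measure X) (s : ℝ) : Prop :=
  ∃ c C : ℝ, 0 < c ∧ 0 < C ∧ ∀ (x : X) (ρ : ℝ), 0 < ρ →
    ENNReal.ofReal ρ < EMetric.diam (Set.univ : Set X) →
    ENNReal.ofReal (c * ρ ^ s) ≤ μ (closedBall x ρ) ∧
      μ (closedBall x ρ) ≤ ENNReal.ofReal (C * ρ ^ s)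

/-- `u ∈ B^r_{q,∞}(X,μ;Y)`. -/
def MemBesov {X Y : Type*} [MetricSpace X] [MeasurableSpace X] [MetricSpace Y]
    [MeasurableSpace Y] [BorelSpace Y]
    (μ : Measure X) (r q : ℝ) (u : X → Y) : Prop :=
  Measurable u ∧
  (∀ (x : X) (R : ℝ), 0 < R →
    ∫⁻ z in closedBall x R, ∫⁻ y in closedBall x R, edist (u z) (u y) ^ q ∂μ ∂μ < ⊤) ∧
  (⨆ (t : ℝ) (_ : 0 < t),
    ∫⁻ x, (ENNReal.ofReal t ^ (r * q))⁻¹ *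
      ((μ (closedBall x t))⁻¹ * ∫⁻ z in closedBall x t, edist (u x) (u z) ^ q ∂μ) ∂μ) < ⊤

/-- The double average `⨍_{B_ε(x)} ⨍_{B_ε(x)} W(z,y) dμ(z) dμ(y)`. -/
noncomputable def doubleAvg {X : Type*} [MetricSpace X] [MeasurableSpace X]
    (μ : Measure X) (W : X → X → ℝ≥0∞) (x : X) (ε : ℝ) : ℝ≥0∞ :=
  (μ (closedBall x ε))⁻¹ * (μ (closedBall x ε))⁻¹ *
    ∫⁻ z in closedBall x ε, ∫⁻ y in closedBall x ε, W z y ∂μ ∂μ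

/-- The gauge function `g_{s,β}` on `[0,∞]`. -/
noncomputable def glogE (s β : ℝ) (r : ℝ≥0∞) : ℝ≥0∞ :=
  if r = 0 then 0 else if r = 1 then ⊤ else if r = ⊤ then ⊤
  else ENNReal.ofReal (r.toReal ^ s / |Real.log r.toReal| ^ β)

/-- The `s`-dimensional logarithmic Hausdorff measure with decreasing factor `β`. -/
noncomputable def logHausdorff {X : Type*} [MetricSpace X]
    (s β : ℝ) (E : Set X) : ℝ≥0∞ :=
  ⨆ (δ : ℝ) (_ : 0 < δ),
    ⨅ (t : ℕ → Set X) (_ : E ⊆ ⋃ n, t n)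
      (_ : ∀ n, EMetric.diam (t n) ≤ ENNReal.ofReal δ),
      ∑' n, glogE s β (EMetric.diam (t n))

/-- Small-scale form of Ahlfors regularity. -/
def SmallReg {X : Type*} [MetricSpace X] [MeasurableSpace X]
    (μ : Measure X) (s c C R : ℝ) : Prop :=
  0 < c ∧ 0 < C ∧ 0 < R ∧ ∀ (x : X) (ρ : ℝ), 0 < ρ → ρ ≤ R →
    ENNReal.ofReal (c * ρ ^ s) ≤ μ (closedBall x ρ) ∧
      μ (closedBall x ρ) ≤ ENNReal.ofReal (C * ρ ^ s)

lemma exists_smallReg {X : Type*} [MetricSpace X] [MeasurableSpace X] [Nontrivial X]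
    {μ : Measure X} {s : ℝ} (h : IsAhlfors μ s) : ∃ c C R : ℝ, SmallReg μ s c C R := by
  obtain ⟨c, C, hc, hC, h⟩ := h
  have hd : 0 < EMetric.diam (Set.univ : Set X) := by
    exact Metric.ediam_pos_iff.2 Set.nontrivial_univ
  obtain ⟨R, hR0, hR⟩ := ENNReal.lt_iff_exists_nnreal_btwn.1 hd
  refine ⟨c, C, R, hc, hC, by exact_mod_cast hR0, fun x ρ hρ hρR => h x ρ hρ ?_⟩
  refine lt_of_le_of_lt ?_ hR
  rw [← ENNReal.ofReal_coe_nnreal]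
  exact ENNReal.ofReal_le_ofReal hρR

lemma doubleAvg_doubling {X : Type*} [MetricSpace X] [MeasurableSpace X]
    {μ : Measure X} {s c C R : ℝ} (hs : 0 < s) (h : SmallReg μ s c C R) (W : X → X → ℝ≥0∞)
    (x : X) {ε η : ℝ} (hε : 0 < ε) (h1 : ε ≤ η) (h2 : η ≤ R) (h3 : η ≤ Real.exp 1 * ε) :
    doubleAvg μ W x ε ≤
      ENNReal.ofReal ((C * Real.exp 1 ^ s / c) ^ 2) * doubleAvg μ W x η := by
  obtain ⟨hc, hC, hR, h⟩ := h
  have hη : 0 < η := hε.trans_le h1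
  have hI : ∫⁻ z in closedBall x ε, ∫⁻ y in closedBall x ε, W z y ∂μ ∂μ ≤
      ∫⁻ z in closedBall x η, ∫⁻ y in closedBall x η, W z y ∂μ ∂μ := by
    refine (lintegral_mono_set (closedBall_subset_closedBall h1)).trans ?_
    exact lintegral_mono fun z => lintegral_mono_set (closedBall_subset_closedBall h1)
  have hεs : 0 < ε ^ s := Real.rpow_pos_of_pos hε s
  have hηs : 0 < η ^ s := Real.rpow_pos_of_pos hη s
  have he : 0 < Real.exp 1 ^ s := Real.rpow_pos_of_pos (Real.exp_pos 1) s
  have hk : (μ (closedBall x ε))⁻¹ ≤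
      ENNReal.ofReal (C * Real.exp 1 ^ s / c) * (μ (closedBall x η))⁻¹ := by
    calc (μ (closedBall x ε))⁻¹ ≤ (ENNReal.ofReal (c * ε ^ s))⁻¹ :=
          ENNReal.inv_le_inv.2 (h x ε hε (h1.trans h2)).1
      _ ≤ ENNReal.ofReal (C * Real.exp 1 ^ s / c) * (ENNReal.ofReal (C * η ^ s))⁻¹ := by
          rw [← ENNReal.ofReal_inv_of_pos (by positivity),
            ← ENNReal.ofReal_inv_of_pos (by positivity), ← ENNReal.ofReal_mul (by positivity)]
          apply ENNReal.ofReal_le_ofReal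
          have : η ^ s ≤ Real.exp 1 ^ s * ε ^ s := by
            rw [← Real.mul_rpow (Real.exp_pos 1).le hε.le]
            exact Real.rpow_le_rpow hη.le h3 hs.le
          have e1 : C * Real.exp 1 ^ s / c * (C * η ^ s)⁻¹ = Real.exp 1 ^ s / (c * η ^ s) := by
            field_simp
          rw [e1, inv_eq_one_div, div_le_div_iff₀ (by positivity) (by positivity)]
          nlinarith
      _ ≤ _ := by
          gcongr
          exact (h x η hη h2).2
  unfold doubleAvg
  calc _ ≤ (ENNReal.ofReal (C * Real.exp 1 ^ s / c) * (μ (closedBall x η))⁻¹) *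
        (ENNReal.ofReal (C * Real.exp 1 ^ s / c) * (μ (closedBall x η))⁻¹) *
        ∫⁻ z in closedBall x η, ∫⁻ y in closedBall x η, W z y ∂μ ∂μ := by gcongr
    _ = _ := by
      rw [ENNReal.ofReal_pow (by positivity)]
      ring

lemma sets_eq {X : Type*} [MetricSpace X] [MeasurableSpace X]
    {μ : Measure X} {s c C R : ℝ} (hs : 0 < s) (h : SmallReg μ s c C R) (W : X → X → ℝ≥0∞)
    {α : ℝ} (hα : 0 ≤ α) :
    {x : X | 0 < limsup (fun ε : ℝ => ENNReal.ofReal (|Real.log ε| ^ α) *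
        doubleAvg μ W x ε) (𝓝[>] (0 : ℝ))}
      = {x : X | 0 < limsup (fun n : ℕ => ENNReal.ofReal ((n : ℝ) ^ α) *
        doubleAvg μ W x (Real.exp (-(n : ℝ)))) atTop} := by
  ext x
  simp only [mem_ofPred_eq]
  set g : ℕ → ℝ≥0∞ := fun n => ENNReal.ofReal ((n : ℝ) ^ α) *
        doubleAvg μ W x (Real.exp (-(n : ℝ))) with hg
  set f : ℝ → ℝ≥0∞ := fun ε : ℝ => ENNReal.ofReal (|Real.log ε| ^ α) * doubleAvg μ W x ε with hf
  constructor
  · intro hx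
    set K : ℝ≥0∞ := ENNReal.ofReal (2 ^ α) * ENNReal.ofReal ((C * Real.exp 1 ^ s / c) ^ 2) with hK
    have hKt : K ≠ ⊤ := ENNReal.mul_ne_top ENNReal.ofReal_ne_top ENNReal.ofReal_ne_top
    have hlog : Tendsto (fun ε : ℝ => -Real.log ε) (𝓝[>] 0) atTop :=
      tendsto_neg_atBot_atTop.comp Real.tendsto_log_nhdsGT_zero
    have hfl : Tendsto (fun ε : ℝ => ⌊-Real.log ε⌋₊) (𝓝[>] 0) atTop :=
      tendsto_nat_floor_atTop.comp hlog
    have hle : ∀ᶠ ε in 𝓝[>] (0 : ℝ), f ε ≤ K * (g ∘ fun ε : ℝ => ⌊-Real.log ε⌋₊) ε := by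
      filter_upwards [self_mem_nhdsWithin, hlog.eventually_ge_atTop 1,
        hlog.eventually_ge_atTop (1 - Real.log R)] with ε hε h1 h2
      have hε : 0 < ε := hε
      have hRpos := h.2.2.1
      set n := ⌊-Real.log ε⌋₊ with hn
      have hn1 : (n : ℝ) ≤ -Real.log ε := Nat.floor_le (by linarith)
      have hn2 : -Real.log ε < n + 1 := Nat.lt_floor_add_one _
      have hn3 : (1 : ℝ) ≤ n := by
        have : 1 ≤ n := Nat.le_floor (by simpa using h1)
        exact_mod_cast this
      have A : ε ≤ Real.exp (-(n : ℝ)) := by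
        rw [← Real.log_le_iff_le_exp hε]; linarith
      have B : Real.exp (-(n : ℝ)) ≤ R := by
        rw [← Real.le_log_iff_exp_le hRpos]; linarith
      have D : Real.exp (-(n : ℝ)) ≤ Real.exp 1 * ε := by
        have e : Real.exp (1 + Real.log ε) = Real.exp 1 * ε := by
          rw [Real.exp_add, Real.exp_log hε]
        rw [← e]
        apply Real.exp_le_exp.2; linarith
      have hd := doubleAvg_doubling hs h W x hε A B D
      have hl : |Real.log ε| ^ α ≤ 2 ^ α * (n : ℝ) ^ α := by
        rw [← Real.mul_rpow (by norm_num) (by linarith)]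
        apply Real.rpow_le_rpow (abs_nonneg _) _ hα
        rw [abs_of_nonpos (by linarith)]
        linarith
      simp only [hf, hg, Function.comp, hK]
      calc _ ≤ ENNReal.ofReal (2 ^ α * (n : ℝ) ^ α) * _ :=
            mul_le_mul' (ENNReal.ofReal_le_ofReal hl) hd
        _ = _ := by
          rw [ENNReal.ofReal_mul (by positivity)]
          ring
    have h5 : limsup f (𝓝[>] (0 : ℝ)) ≤ K * limsup g atTop := by
      calc _ ≤ limsup (fun ε => K * (g ∘ fun ε : ℝ => ⌊-Real.log ε⌋₊) ε) (𝓝[>] (0 : ℝ)) :=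
            limsup_le_limsup hle
        _ = K * limsup (g ∘ fun ε : ℝ => ⌊-Real.log ε⌋₊) (𝓝[>] (0 : ℝ)) :=
            ENNReal.limsup_const_mul_of_ne_top hKt
        _ ≤ _ := mul_le_mul_right (hfl.limsup_comp_le_limsup) _
    rw [pos_iff_ne_zero]
    intro h0
    rw [h0, mul_zero] at h5
    exact absurd hx (not_lt.2 h5)
  · intro hx
    refine hx.trans_le ?_
    have ht : Tendsto (fun n : ℕ => Real.exp (-(n : ℝ))) atTop (𝓝[>] 0) := by
      refine tendsto_nhdsWithin_iff.2 ⟨?_, Eventually.of_forall fun n => Real.exp_pos _⟩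
      exact Real.tendsto_exp_neg_atTop_nhds_zero.comp tendsto_natCast_atTop_atTop
    have : g = f ∘ fun n : ℕ => Real.exp (-(n : ℝ)) := by
      funext n
      simp [hf, hg]
    rw [this]
    exact ht.limsup_comp_le_limsup

lemma energy {X Y : Type*} [MetricSpace X] [MeasurableSpace X] [BorelSpace X]
    [MetricSpace Y] [MeasurableSpace Y] [BorelSpace Y]
    {μ : Measure X} {s r q c C R : ℝ} (h : SmallReg μ s c C R)
    {u : X → Y} (hu : MemBesov μ r q u) :
    ∃ K : ℝ, 0 ≤ K ∧ ∀ ε : ℝ, 0 < ε → 2 * ε ≤ R → ∀ F : Finset X,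
      (F : Set X).PairwiseDisjoint (fun x => closedBall x ε) →
      ∑ x ∈ F, doubleAvg μ (fun z y => edist (u z) (u y) ^ q) x ε ≤
        ENNReal.ofReal (K * ε ^ (-(s - r * q))) := by
  obtain ⟨hc, hC, hR, h⟩ := h
  obtain ⟨-, -, hM⟩ := hu
  set M := (⨆ (t : ℝ) (_ : 0 < t),
    ∫⁻ x, (ENNReal.ofReal t ^ (r * q))⁻¹ *
      ((μ (closedBall x t))⁻¹ * ∫⁻ z in closedBall x t, edist (u x) (u z) ^ q ∂μ) ∂μ) with hMd
  refine ⟨M.toReal * C * 2 ^ (r * q + s) / c ^ 2, by positivity, fun ε hε hεR F hF => ?_⟩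
  have hεs : 0 < ε ^ s := Real.rpow_pos_of_pos hε s
  have h2ε : 0 < 2 * ε := by linarith
  have ht1 : 0 < (2 * ε) ^ s := Real.rpow_pos_of_pos h2ε s
  have ht2 : 0 < (2 * ε) ^ (r * q) := Real.rpow_pos_of_pos h2ε _
  set I : X → ℝ≥0∞ := fun x =>
    ∫⁻ z in closedBall x ε, ∫⁻ y in closedBall x ε, edist (u z) (u y) ^ q ∂μ ∂μ with hI
  set G : X → ℝ≥0∞ := fun x => (ENNReal.ofReal (2 * ε) ^ (r * q))⁻¹ *
      ((μ (closedBall x (2 * ε)))⁻¹ * ∫⁻ z in closedBall x (2 * ε), edist (u x) (u z) ^ q ∂μ)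
    with hG
  set D : ℝ := (2 * ε) ^ (r * q) * (C * (2 * ε) ^ s) with hD
  have hDpos : 0 < D := by positivity
  have hIG : ∀ x, ENNReal.ofReal D⁻¹ * I x ≤ ∫⁻ z in closedBall x ε, G z ∂μ := by
    intro x
    rw [hI, ← lintegral_const_mul' _ _ ENNReal.ofReal_ne_top]
    refine setLIntegral_mono' measurableSet_closedBall fun z hz => ?_
    have hsub : closedBall x ε ⊆ closedBall z (2 * ε) := by
      apply closedBall_subset_closedBall'
      rw [mem_closedBall, dist_comm] at hz
      linarith
    have e1 : ENNReal.ofReal D⁻¹ = (ENNReal.ofReal (2 * ε) ^ (r * q))⁻¹ *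
        (ENNReal.ofReal (C * (2 * ε) ^ s))⁻¹ := by
      rw [ENNReal.ofReal_rpow_of_pos h2ε, ← ENNReal.ofReal_inv_of_pos ht2,
        ← ENNReal.ofReal_inv_of_pos (by positivity), ← ENNReal.ofReal_mul (by positivity), hD,
        mul_inv]
    rw [e1, mul_assoc]
    simp only [hG]
    gcongr
    exact (h z (2 * ε) h2ε hεR).2
  have hsum : ENNReal.ofReal D⁻¹ * ∑ x ∈ F, I x ≤ M := by
    rw [Finset.mul_sum]
    calc _ ≤ ∑ x ∈ F, ∫⁻ z in closedBall x ε, G z ∂μ := Finset.sum_le_sum fun x _ => hIG x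
      _ = ∫⁻ z in ⋃ x ∈ F, closedBall x ε, G z ∂μ :=
        (lintegral_biUnion_finset hF (fun b _ => measurableSet_closedBall) G).symm
      _ ≤ ∫⁻ z, G z ∂μ := setLIntegral_le_lintegral _ _
      _ ≤ M := by
        rw [hMd]
        exact le_iSup₂_of_le (2 * ε) h2ε le_rfl
  have hsum2 : ∑ x ∈ F, I x ≤ ENNReal.ofReal (D * M.toReal) := by
    calc ∑ x ∈ F, I x = ENNReal.ofReal D * (ENNReal.ofReal D⁻¹ * ∑ x ∈ F, I x) := by
          rw [← mul_assoc, ← ENNReal.ofReal_mul hDpos.le, mul_inv_cancel₀ hDpos.ne']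
          simp
      _ ≤ ENNReal.ofReal D * M := by gcongr
      _ = _ := by rw [ENNReal.ofReal_mul hDpos.le, ENNReal.ofReal_toReal hM.ne]
  have hA : ∀ x, doubleAvg μ (fun z y => edist (u z) (u y) ^ q) x ε ≤
      ENNReal.ofReal ((c * ε ^ s)⁻¹ * (c * ε ^ s)⁻¹) * I x := by
    intro x
    have : (μ (closedBall x ε))⁻¹ ≤ ENNReal.ofReal (c * ε ^ s)⁻¹ := by
      rw [ENNReal.ofReal_inv_of_pos (by positivity)]
      exact ENNReal.inv_le_inv.2 (h x ε hε (by linarith)).1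
    rw [ENNReal.ofReal_mul (by positivity)]
    unfold doubleAvg
    simp only [hI]
    gcongr
  calc _ ≤ ∑ x ∈ F, ENNReal.ofReal ((c * ε ^ s)⁻¹ * (c * ε ^ s)⁻¹) * I x :=
        Finset.sum_le_sum fun x _ => hA x
    _ = ENNReal.ofReal ((c * ε ^ s)⁻¹ * (c * ε ^ s)⁻¹) * ∑ x ∈ F, I x := by rw [Finset.mul_sum]
    _ ≤ ENNReal.ofReal ((c * ε ^ s)⁻¹ * (c * ε ^ s)⁻¹) * ENNReal.ofReal (D * M.toReal) := by
        gcongr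
    _ = _ := by
        rw [← ENNReal.ofReal_mul (by positivity)]
        congr 1
        rw [hD, Real.mul_rpow (by norm_num) hε.le, Real.mul_rpow (by norm_num) hε.le,
          Real.rpow_add (by norm_num), neg_sub, Real.rpow_sub hε]
        field_simp

lemma cover {X : Type*} [MetricSpace X] (A : X → ℝ≥0∞) {ε B η : ℝ} (hε : 0 < ε) (hη : 0 < η)
    (hB : 0 ≤ B)
    (hA : ∀ F : Finset X, (F : Set X).PairwiseDisjoint (fun x => closedBall x ε) →
      ∑ x ∈ F, A x ≤ ENNReal.ofReal B) :
    ∃ F : Finset X, (F.card : ℝ) ≤ B / η ∧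
      ∀ x, ENNReal.ofReal η ≤ A x → ∃ y ∈ F, x ∈ closedBall y (2 * ε) := by
  classical
  let P : ℕ → Prop := fun n => ∃ F : Finset X, F.card = n ∧ (∀ x ∈ F, ENNReal.ofReal η ≤ A x) ∧
    (F : Set X).PairwiseDisjoint (fun x => closedBall x ε)
  have hP : ∀ n, P n → (n : ℝ) ≤ B / η := by
    rintro n ⟨F, rfl, h1, h2⟩
    rw [le_div_iff₀ hη, ← ENNReal.ofReal_le_ofReal_iff hB]
    refine le_trans ?_ (hA F h2)
    rw [ENNReal.ofReal_mul (by positivity), ENNReal.ofReal_natCast, ← nsmul_eq_mul]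
    exact Finset.card_nsmul_le_sum _ _ _ h1
  have hP' : ∀ n, P n → n ≤ ⌊B / η⌋₊ := fun n hn => Nat.le_floor (hP n hn)
  have hP0 : P 0 := ⟨∅, by simp⟩
  have hspec : P (Nat.findGreatest P ⌊B / η⌋₊) := Nat.findGreatest_spec (Nat.zero_le _) hP0
  obtain ⟨F, hc, h1, h2⟩ := id hspec
  refine ⟨F, by rw [hc]; exact hP _ hspec, fun x hx => ?_⟩
  by_contra! hcon
  have hdisj : ∀ y ∈ F, Disjoint (closedBall x ε) (closedBall y ε) := by
    intro y hy
    apply closedBall_disjoint_closedBall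
    have := hcon y hy
    rw [mem_closedBall, not_le] at this
    linarith
  by_cases hxF : x ∈ F
  · have := hcon x hxF
    exact this (mem_closedBall_self (by linarith))
  · have : P (F.card + 1) := by
      refine ⟨insert x F, Finset.card_insert_of_notMem hxF, ?_, ?_⟩
      · intro y hy
        rcases Finset.mem_insert.1 hy with rfl | hy
        · exact hx
        · exact h1 y hy
      · rw [Finset.coe_insert]
        exact h2.insert fun y hy _ => hdisj y hy
    have := Nat.le_findGreatest (hP' _ this) this
    omega

lemma glogE_le {p β ρ : ℝ} (hp : 0 ≤ p) (hβ : 0 ≤ β) (h0 : 0 < ρ) (h1 : ρ < 1) {d : ℝ≥0∞}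
    (hd : d ≤ ENNReal.ofReal ρ) :
    glogE p β d ≤ ENNReal.ofReal (ρ ^ p / |Real.log ρ| ^ β) := by
  have hd1 : d < 1 := hd.trans_lt (by simpa using h1)
  have hdt : d ≠ ⊤ := (hd1.trans ENNReal.one_lt_top).ne
  unfold glogE
  split_ifs with ha hb
  · exact zero_le
  · exact absurd hb hd1.ne
  · apply ENNReal.ofReal_le_ofReal
    have hdp : 0 < d.toReal := ENNReal.toReal_pos ha hdt
    have hle : d.toReal ≤ ρ := ENNReal.toReal_le_of_le_ofReal h0.le hd
    have hl : Real.log d.toReal ≤ Real.log ρ := Real.log_le_log hdp hle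
    have hl0 : Real.log ρ < 0 := Real.log_neg h0 h1
    have habs : |Real.log ρ| ≤ |Real.log d.toReal| := by
      rw [abs_of_neg hl0, abs_of_neg (hl.trans_lt hl0)]
      linarith
    have hpos : 0 < |Real.log ρ| := abs_pos.2 hl0.ne
    gcongr

lemma rpow_le_glogE {p β d : ℝ} (h0 : 0 ≤ p) (hpd : p < d) :
    (fun x : ℝ≥0∞ => x ^ d) ≤ᶠ[𝓝 0] glogE p β := by
  have hlo := (isLittleO_abs_log_rpow_rpow_nhdsGT_zero β (s := p - d) (by linarith)).bound
    (c := 1) one_pos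
  obtain ⟨a, ha, hlo⟩ := mem_nhdsGT_iff_exists_Ioo_subset.1 hlo
  have ha : 0 < a := ha
  have hev : ∀ᶠ x : ℝ≥0∞ in 𝓝 0, x < ENNReal.ofReal (min a 1) :=
    Iio_mem_nhds (by simpa using ha)
  filter_upwards [hev] with x hx
  have hx1 : x < 1 := hx.trans_le (by simp)
  have hxt : x ≠ ⊤ := (hx1.trans ENNReal.one_lt_top).ne
  unfold glogE
  split_ifs with h1 h2
  · simp [h1, h0.trans_lt hpd]
  · exact absurd h2 hx1.ne
  · have hxp : 0 < x.toReal := ENNReal.toReal_pos h1 hxt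
    have hxa : x.toReal < min a 1 := by
      have := (ENNReal.toReal_lt_toReal hxt ENNReal.ofReal_ne_top).2 hx
      rwa [ENNReal.toReal_ofReal (by positivity)] at this
    have hxa' := hlo ⟨hxp, hxa.trans_le (min_le_left _ _)⟩
    simp only [mem_ofPred_eq, one_mul] at hxa'
    have hlog : Real.log x.toReal < 0 := Real.log_neg hxp (hxa.trans_le (min_le_right _ _))
    have hL : 0 < |Real.log x.toReal| ^ β := Real.rpow_pos_of_pos (abs_pos.2 hlog.ne) _
    rw [Real.norm_of_nonneg hL.le, Real.norm_of_nonneg (by positivity)] at hxa'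
    have e : x ^ d = ENNReal.ofReal (x.toReal ^ d) := by
      rw [← ENNReal.ofReal_rpow_of_pos hxp, ENNReal.ofReal_toReal hxt]
    rw [e]
    apply ENNReal.ofReal_le_ofReal
    rw [le_div_iff₀ hL]
    calc x.toReal ^ d * |Real.log x.toReal| ^ β ≤ x.toReal ^ d * x.toReal ^ (p - d) := by gcongr
      _ = x.toReal ^ p := by rw [← Real.rpow_add hxp]; congr 1; ring

lemma logHausdorff_le {X : Type*} [MetricSpace X] [MeasurableSpace X] [BorelSpace X]
    (p β : ℝ) (E : Set X) : logHausdorff p β E ≤ Measure.mkMetric (glogE p β) E := by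
  rw [Measure.mkMetric_apply]
  unfold logHausdorff
  refine iSup₂_le fun δ hδ => le_iSup₂_of_le (ENNReal.ofReal δ) (by simpa using hδ) ?_
  refine iInf_mono fun t => iInf_mono fun h1 => iInf_mono fun h2 => ?_
  refine ENNReal.tsum_le_tsum fun n => ?_
  rcases (t n).eq_empty_or_nonempty with h | h
  · have : glogE p β (EMetric.diam (t n)) = 0 := by
      rw [h]
      have : EMetric.diam (∅ : Set X) = 0 := Metric.ediam_empty
      simp [glogE, this]
    rw [this]
    exact zero_le
  · exact le_iSup_of_le h le_rfl

lemma mkMetric_zero {X : Type*} [MetricSpace X] [MeasurableSpace X] [BorelSpace X]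
    {A : X → ℝ → ℝ≥0∞} {p K R α β : ℝ} (hp : 0 ≤ p) (hK : 0 ≤ K) (hR : 0 < R) (hα : 0 ≤ α)
    (hβ : 1 + α < β)
    (hA : ∀ ε : ℝ, 0 < ε → 2 * ε ≤ R → ∀ F : Finset X,
      (F : Set X).PairwiseDisjoint (fun x => closedBall x ε) →
      ∑ x ∈ F, A x ε ≤ ENNReal.ofReal (K * ε ^ (-p))) :
    Measure.mkMetric (glogE p β) {x : X | 0 < limsup (fun n : ℕ => ENNReal.ofReal ((n : ℝ) ^ α) *
        A x (Real.exp (-(n : ℝ)))) atTop} = 0 := by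
  set S : ℕ → Set X := fun k => {x : X | ∃ᶠ n : ℕ in atTop, ENNReal.ofReal (1 / ((k : ℝ) + 1)) ≤
    ENNReal.ofReal ((n : ℝ) ^ α) * A x (Real.exp (-(n : ℝ)))} with hS
  have hsub : {x : X | 0 < limsup (fun n : ℕ => ENNReal.ofReal ((n : ℝ) ^ α) *
        A x (Real.exp (-(n : ℝ)))) atTop} ⊆ ⋃ k, S k := by
    intro x hx
    obtain ⟨b, hb0, hb⟩ := ENNReal.lt_iff_exists_nnreal_btwn.1 hx
    have hb0 : (0 : ℝ) < b := by exact_mod_cast hb0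
    obtain ⟨k, hk⟩ := exists_nat_one_div_lt hb0
    refine mem_iUnion.2 ⟨k, ?_⟩
    refine (frequently_lt_of_lt_limsup (by isBoundedDefault) hb).mono fun n hn => ?_
    refine le_trans ?_ hn.le
    rw [← ENNReal.ofReal_coe_nnreal]
    exact ENNReal.ofReal_le_ofReal hk.le
  refine measure_mono_null hsub (measure_iUnion_null fun k => ?_)
  -- covers at each scale
  have hexp : Tendsto (fun n : ℕ => Real.exp (-(n : ℝ))) atTop (𝓝 0) :=
    Real.tendsto_exp_neg_atTop_nhds_zero.comp tendsto_natCast_atTop_atTop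
  have hsmall : ∀ᶠ n : ℕ in atTop, 2 * Real.exp (-(n : ℝ)) ≤ R := by
    have : Tendsto (fun n : ℕ => 2 * Real.exp (-(n : ℝ))) atTop (𝓝 0) := by
      simpa using hexp.const_mul 2
    exact (this.eventually (gt_mem_nhds hR)).mono fun n hn => le_of_lt hn
  obtain ⟨n0, hn0⟩ := eventually_atTop.1 (hsmall.and (eventually_ge_atTop 3))
  have hF : ∀ n : ℕ, ∃ F : Finset X, n0 ≤ n →
      ((F.card : ℝ) ≤ K * Real.exp (-(n : ℝ)) ^ (-p) / (1 / ((k : ℝ) + 1) / (n : ℝ) ^ α) ∧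
      ∀ x, ENNReal.ofReal (1 / ((k : ℝ) + 1)) ≤
        ENNReal.ofReal ((n : ℝ) ^ α) * A x (Real.exp (-(n : ℝ))) →
        ∃ y ∈ F, x ∈ closedBall y (2 * Real.exp (-(n : ℝ)))) := by
    intro n
    by_cases hn : n0 ≤ n
    · obtain ⟨h1, h2⟩ := hn0 n hn
      have hnp : (0 : ℝ) < n := by exact_mod_cast (by omega : 0 < n)
      have hna : (0 : ℝ) < (n : ℝ) ^ α := Real.rpow_pos_of_pos hnp _
      have hep := Real.exp_pos (-(n : ℝ))
      obtain ⟨F, hF1, hF2⟩ := cover (fun x => A x (Real.exp (-(n : ℝ)))) hep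
        (η := 1 / ((k : ℝ) + 1) / (n : ℝ) ^ α) (by positivity) (by positivity)
        (hA _ hep h1)
      refine ⟨F, fun _ => ⟨hF1, fun x hx => hF2 x ?_⟩⟩
      rw [ENNReal.ofReal_div_of_pos hna]
      exact ENNReal.div_le_of_le_mul' hx
    · exact ⟨∅, fun h => absurd h hn⟩
  choose F hF using hF
  set Z : ℝ := K * ((k : ℝ) + 1) * 4 ^ p * 2 ^ β with hZ
  have hZ0 : 0 ≤ Z := by positivity
  set T : ℕ → ℝ≥0∞ := fun n => ENNReal.ofReal (Z * (n : ℝ) ^ (α - β)) with hT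
  have hTsum : ∑' n, T n ≠ ⊤ := by
    have : Summable fun n : ℕ => Z * (n : ℝ) ^ (α - β) :=
      (Real.summable_nat_rpow.2 (by linarith)).mul_left Z
    rw [hT, ← ENNReal.ofReal_tsum_of_nonneg (fun n => by positivity) this]
    exact ENNReal.ofReal_ne_top
  have hdiam : ∀ (n : ℕ) (y : X), Metric.ediam (closedBall y (2 * Real.exp (-(n : ℝ)))) ≤
      ENNReal.ofReal (4 * Real.exp (-(n : ℝ))) := by
    intro n y
    refine Metric.ediam_le_of_forall_dist_le fun a ha b hb => ?_
    have := dist_triangle_right a b y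
    rw [mem_closedBall] at ha hb
    linarith
  have hterm : ∀ n, n0 ≤ n → ∑ y ∈ F n,
      glogE p β (Metric.ediam (closedBall y (2 * Real.exp (-(n : ℝ))))) ≤ T n := by
    intro n hn
    obtain ⟨-, h2⟩ := hn0 n hn
    have hcard := (hF n hn).1
    have hn3 : (3 : ℝ) ≤ n := by exact_mod_cast h2
    have hnp : (0 : ℝ) < n := by linarith
    have hep := Real.exp_pos (-(n : ℝ))
    set e := Real.exp (-(n : ℝ)) with he
    have hlog4 : Real.log 4 ≤ 1.5 := by
      have : (4 : ℝ) = 2 ^ 2 := by norm_num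
      rw [this, Real.log_pow]
      have := Real.log_two_lt_d9
      push_cast
      linarith
    have hlog : Real.log (4 * e) = Real.log 4 - n := by
      rw [Real.log_mul (by norm_num) hep.ne', he, Real.log_exp]; ring
    have hlt : 4 * e < 1 := by
      rw [← Real.log_neg_iff (by positivity), hlog]
      linarith
    have habs : (n : ℝ) / 2 ≤ |Real.log (4 * e)| := by
      rw [hlog, abs_of_neg (by linarith)]
      linarith
    have hβ0 : 0 ≤ β := by linarith
    have hna : (0 : ℝ) < (n : ℝ) ^ α := Real.rpow_pos_of_pos hnp _
    have hnb : (0 : ℝ) < (n : ℝ) ^ β := Real.rpow_pos_of_pos hnp _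
    have hepp : 0 < e ^ p := Real.rpow_pos_of_pos hep _
    have hg : ∀ y ∈ F n, glogE p β (Metric.ediam (closedBall y (2 * e))) ≤
        ENNReal.ofReal ((4 * e) ^ p / ((n : ℝ) / 2) ^ β) := by
      intro y _
      refine (glogE_le hp hβ0 (by positivity) hlt (hdiam n y)).trans ?_
      apply ENNReal.ofReal_le_ofReal
      gcongr
    refine (Finset.sum_le_card_nsmul _ _ _ hg).trans ?_
    rw [nsmul_eq_mul, ← ENNReal.ofReal_natCast, ← ENNReal.ofReal_mul (by positivity)]
    apply ENNReal.ofReal_le_ofReal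
    calc _ ≤ K * e ^ (-p) / (1 / ((k : ℝ) + 1) / (n : ℝ) ^ α) *
          ((4 * e) ^ p / ((n : ℝ) / 2) ^ β) := by gcongr
      _ = _ := by
        rw [hZ, Real.mul_rpow (by norm_num) hep.le, Real.div_rpow hnp.le (by norm_num),
          Real.rpow_sub hnp, Real.rpow_neg hep.le]
        field_simp
  have hmain := Measure.mkMetric_le_liminf_tsum (l := (atTop : Filter ℕ))
    (ι := fun N : ℕ => Σ n : ℕ, {y // y ∈ F (n + N)}) (S k)
    (fun N => ENNReal.ofReal (4 * Real.exp (-(N : ℝ))))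
    (by
      have : Tendsto (fun n : ℕ => 4 * Real.exp (-(n : ℝ))) atTop (𝓝 0) := by
        simpa using hexp.const_mul 4
      simpa using ENNReal.tendsto_ofReal this)
    (fun N i => closedBall (i.2 : X) (2 * Real.exp (-((i.1 + N : ℕ) : ℝ))))
    (Eventually.of_forall fun N i => (hdiam _ _).trans (by
      apply ENNReal.ofReal_le_ofReal
      gcongr
      omega))
    (by
      filter_upwards [eventually_ge_atTop n0] with N hN x hx
      obtain ⟨n, hn, hxn⟩ := (frequently_atTop.1 hx) N
      obtain ⟨y, hy, hxy⟩ := (hF n (hN.trans hn)).2 x hxn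
      have hnN : n = (n - N) + N := by omega
      rw [hnN] at hy hxy
      exact mem_iUnion.2 ⟨⟨n - N, y, hy⟩, hxy⟩)
    (glogE p β)
  have hlim : Tendsto (fun N : ℕ => ∑' i : (Σ n : ℕ, {y // y ∈ F (n + N)}),
      glogE p β (Metric.ediam (closedBall (i.2 : X) (2 * Real.exp (-((i.1 + N : ℕ) : ℝ))))))
      atTop (𝓝 0) := by
    refine tendsto_of_tendsto_of_tendsto_of_le_of_le' tendsto_const_nhds
      (ENNReal.tendsto_sum_nat_add T hTsum) (Eventually.of_forall fun _ => zero_le) ?_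
    filter_upwards [eventually_ge_atTop n0] with N hN
    rw [ENNReal.tsum_sigma']
    refine ENNReal.tsum_le_tsum fun n => ?_
    rw [Finset.tsum_subtype (F (n + N)) fun y =>
      glogE p β (Metric.ediam (closedBall y (2 * Real.exp (-((n + N : ℕ) : ℝ)))))]
    exact hterm (n + N) (by omega)
  rw [hlim.liminf_eq] at hmain
  exact le_antisymm hmain zero_le

/-- For a Besov function `u ∈ B^r_{q,∞}`, the set `D_α` of points where
`limsup_{ε→0⁺} |ln ε|^α ⨍⨍_{B_ε(x)} ρ(u z, u y)^q > 0` equals its sequential version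
along `ε_n = e^{-n}`; it is `Λ^{s-rq,β}`-null whenever `β > 1 + α`, and its Hausdorff
dimension is at most `s - rq`. -/
theorem statement17 {X Y : Type*} [MetricSpace X] [MeasurableSpace X] [BorelSpace X]
    [MetricSpace Y] [MeasurableSpace Y] [BorelSpace Y]
    (μ : Measure X) (s r q : ℝ) (hs : 0 < s)
    (hμ : IsAhlfors μ s) (hr0 : 0 ≤ r) (hr1 : r ≤ 1) (hq : 0 < q) (hrq : r * q ≤ s)
    (u : X → Y) (hu : MemBesov μ r q u) (α : ℝ) (hα : 0 ≤ α) :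
    {x : X | 0 < limsup (fun ε : ℝ => ENNReal.ofReal (|Real.log ε| ^ α) *
        doubleAvg μ (fun z y => edist (u z) (u y) ^ q) x ε) (𝓝[>] (0 : ℝ))}
      = {x : X | 0 < limsup (fun n : ℕ => ENNReal.ofReal ((n : ℝ) ^ α) *
        doubleAvg μ (fun z y => edist (u z) (u y) ^ q) x (Real.exp (-(n : ℝ)))) atTop} ∧
    (∀ β : ℝ, 1 + α < β →
      logHausdorff (s - r * q) β
        {x : X | 0 < limsup (fun ε : ℝ => ENNReal.ofReal (|Real.log ε| ^ α) *
          doubleAvg μ (fun z y => edist (u z) (u y) ^ q) x ε) (𝓝[>] (0 : ℝ))} = 0) ∧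
    dimH {x : X | 0 < limsup (fun ε : ℝ => ENNReal.ofReal (|Real.log ε| ^ α) *
        doubleAvg μ (fun z y => edist (u z) (u y) ^ q) x ε) (𝓝[>] (0 : ℝ))}
      ≤ ENNReal.ofReal (s - r * q) := by
  rcases subsingleton_or_nontrivial X with hX | hX
  · have hz : ∀ x ε, doubleAvg μ (fun z y => edist (u z) (u y) ^ q) x ε = 0 := by
      intro x ε
      have : ∀ z y : X, edist (u z) (u y) ^ q = 0 := by
        intro z y
        rw [Subsingleton.elim z y, edist_self, ENNReal.zero_rpow_of_pos hq]
      simp [doubleAvg, this]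
    have h0 : {x : X | 0 < limsup (fun ε : ℝ => ENNReal.ofReal (|Real.log ε| ^ α) *
        doubleAvg μ (fun z y => edist (u z) (u y) ^ q) x ε) (𝓝[>] (0 : ℝ))} = ∅ := by
      ext x
      simp [hz]
    rw [h0]
    refine ⟨?_, fun β _ => ?_, by simp⟩
    · ext x
      simp [hz]
    · exact le_antisymm ((logHausdorff_le _ _ _).trans (by simp)) zero_le
  · obtain ⟨c, C, R, hreg⟩ := exists_smallReg hμ
    have heq := sets_eq hs hreg (fun z y => edist (u z) (u y) ^ q) hα
    obtain ⟨K, hK, hen⟩ := energy hreg hu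
    have hp : 0 ≤ s - r * q := by linarith
    have hnull : ∀ β : ℝ, 1 + α < β → Measure.mkMetric (glogE (s - r * q) β)
        {x : X | 0 < limsup (fun ε : ℝ => ENNReal.ofReal (|Real.log ε| ^ α) *
          doubleAvg μ (fun z y => edist (u z) (u y) ^ q) x ε) (𝓝[>] (0 : ℝ))} = 0 := by
      intro β hβ
      rw [heq]
      exact mkMetric_zero hp hK hreg.2.2.1 hα hβ hen
    refine ⟨heq, fun β hβ => ?_, ?_⟩
    · exact le_antisymm ((logHausdorff_le _ _ _).trans (hnull β hβ).le) zero_le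
    · rw [dimH_def]
      refine iSup₂_le fun d hd => ?_
      by_contra! hlt
      have hlt' : s - r * q < d := by
        rw [← ENNReal.ofReal_coe_nnreal] at hlt
        exact (ENNReal.ofReal_lt_ofReal_iff_of_nonneg hp).1 hlt
      have hle := Measure.mkMetric_mono (X := X) (rpow_le_glogE (β := 2 + α) hp hlt')
      have := (hle _).trans (hnull (2 + α) (by linarith)).le
      borelize X
      unfold Measure.hausdorffMeasure at hd
      rw [hd] at this
      exact absurd this (by simp)
end

section
/- Let X be a metric space, μ an Ahlfors s-regular measure on X for some s ∈ (0,∞), 0 ≤ r ≤ 1 and 0 < q < ∞ with rq ≤ s, (Y,ρ) a complete metric space, and u ∈ B^r_{q,∞}(X,μ;Y). Define N := { x ∈ X : for every y ∈ Y, limsup_{ε→0⁺} ⨍_{B_ε(x)} ρ(u(z),y)^q dμ(z) > 0 }. If β > q + 1, then Λ^{s−rq,β}(N) = 0. Moreover, for every x ∈ X \ N there exists u*(x) ∈ Y such that lim_{ε→0⁺} ⨍_{B_ε(x)} ρ(u(z),u*(x))^q dμ(z) = 0; that is, Λ^{s−rq,β}-almost every point of X is a Lebesgue point of u, and in particular the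 Hausdorff dimension of N is at most s − rq. -/
open MeasureTheory Metric Filter Set
open scoped ENNReal Topology

lemma aux_add_rpow (q : ℝ) (hq : 0 < q) (a b : ℝ≥0∞) :
    (a + b) ^ q ≤ 2 ^ q * (a ^ q + b ^ q) := by
  have h1 : a + b ≤ 2 * max a b := by
    rw [two_mul]; exact add_le_add (le_max_left _ _) (le_max_right _ _)
  calc (a + b) ^ q ≤ (2 * max a b) ^ q := ENNReal.rpow_le_rpow h1 hq.le
    _ = 2 ^ q * (max a b) ^ q := ENNReal.mul_rpow_of_nonneg _ _ hq.le
    _ ≤ 2 ^ q * (a ^ q + b ^ q) := by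
      gcongr
      rcases le_total a b with h | h
      · rw [max_eq_right h]; exact le_add_self
      · rw [max_eq_left h]; exact le_self_add

lemma aux_energy {X Y : Type*} [MetricSpace X] [MeasurableSpace X] [BorelSpace X]
    [MetricSpace Y] (μ : Measure X) (s r q c C T : ℝ) (hc : 0 < c)
    (hb : ∀ (x : X) (ρ : ℝ), 0 < ρ → ρ ≤ T →
      ENNReal.ofReal (c * ρ ^ s) ≤ μ (closedBall x ρ) ∧
      μ (closedBall x ρ) ≤ ENNReal.ofReal (C * ρ ^ s))
    (u : X → Y) (M : ℝ≥0∞)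
    (hM : ∀ t : ℝ, 0 < t → ∫⁻ x, (ENNReal.ofReal t ^ (r * q))⁻¹ *
      ((μ (closedBall x t))⁻¹ * ∫⁻ z in closedBall x t, edist (u x) (u z) ^ q ∂μ) ∂μ ≤ M)
    (t : ℝ) (ht : 0 < t) (htT : 2 * t ≤ T) (F : Finset X)
    (hF : (F : Set X).PairwiseDisjoint (fun a => closedBall a t)) :
    ∑ a ∈ F, ∫⁻ x in closedBall a t, ∫⁻ z in closedBall a t, edist (u x) (u z) ^ q ∂μ ∂μ
      ≤ ENNReal.ofReal (2 * t) ^ (r * q) * ENNReal.ofReal (C * (2 * t) ^ s) * M := by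
  have h2t : 0 < 2 * t := by linarith
  set W := ENNReal.ofReal (2 * t) ^ (r * q) with hW
  have hW0 : W ≠ 0 := by
    rw [hW]; exact (ENNReal.rpow_pos (by simpa using ht) ENNReal.ofReal_ne_top).ne'
  have hWt : W ≠ ⊤ := by
    rw [hW]; exact ENNReal.rpow_ne_top_of_ne_zero (by simpa using ht) ENNReal.ofReal_ne_top
  set V := ENNReal.ofReal (C * (2 * t) ^ s) with hV
  have hVt : V ≠ ⊤ := ENNReal.ofReal_ne_top
  set Φ : X → ℝ≥0∞ := fun x => W⁻¹ *
      ((μ (closedBall x (2*t)))⁻¹ * ∫⁻ z in closedBall x (2*t), edist (u x) (u z) ^ q ∂μ) with hΦ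
  have key : ∀ a x : X, x ∈ closedBall a t →
      ∫⁻ z in closedBall a t, edist (u x) (u z) ^ q ∂μ ≤ W * V * Φ x := by
    intro a x hx
    obtain ⟨b1, b2⟩ := hb x (2*t) h2t htT
    have hμ0 : μ (closedBall x (2*t)) ≠ 0 := by
      have : 0 < ENNReal.ofReal (c * (2*t) ^ s) := by
        rw [ENNReal.ofReal_pos]; positivity
      exact (this.trans_le b1).ne'
    have hμt : μ (closedBall x (2*t)) ≠ ⊤ := (b2.trans_lt ENNReal.ofReal_lt_top).ne
    have hsub : closedBall a t ⊆ closedBall x (2*t) := by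
      apply closedBall_subset_closedBall'
      rw [mem_closedBall, dist_comm] at hx
      linarith
    calc ∫⁻ z in closedBall a t, edist (u x) (u z) ^ q ∂μ
        ≤ ∫⁻ z in closedBall x (2*t), edist (u x) (u z) ^ q ∂μ := lintegral_mono_set hsub
      _ = W * μ (closedBall x (2*t)) * Φ x := by
        rw [hΦ]
        have e : ∀ I : ℝ≥0∞, W * μ (closedBall x (2*t)) * (W⁻¹ * ((μ (closedBall x (2*t)))⁻¹ * I))
            = (W * W⁻¹) * (μ (closedBall x (2*t)) * (μ (closedBall x (2*t)))⁻¹) * I := by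
          intro I; ring
        rw [e, ENNReal.mul_inv_cancel hW0 hWt, ENNReal.mul_inv_cancel hμ0 hμt]; simp
      _ ≤ W * V * Φ x := by gcongr
  calc ∑ a ∈ F, ∫⁻ x in closedBall a t, ∫⁻ z in closedBall a t, edist (u x) (u z) ^ q ∂μ ∂μ
      ≤ ∑ a ∈ F, ∫⁻ x in closedBall a t, W * V * Φ x ∂μ :=
        Finset.sum_le_sum fun a _ => setLIntegral_mono' measurableSet_closedBall (key a)
    _ = ∫⁻ x in ⋃ a ∈ F, closedBall a t, W * V * Φ x ∂μ :=
        (lintegral_biUnion_finset hF (fun _ _ => measurableSet_closedBall) _).symm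
    _ ≤ ∫⁻ x, W * V * Φ x ∂μ := setLIntegral_le_lintegral _ _
    _ = W * V * ∫⁻ x, Φ x ∂μ := lintegral_const_mul' _ _ (ENNReal.mul_ne_top hWt hVt)
    _ ≤ W * V * M := by gcongr; exact hM (2*t) h2t

lemma aux_choose {X Y : Type*} [MetricSpace X] [MeasurableSpace X] [BorelSpace X]
    [MetricSpace Y] (μ : Measure X) (q : ℝ) (u : X → Y) (B : Set X) (hB : MeasurableSet B)
    (h0 : μ B ≠ 0) (ht : μ B ≠ ⊤) (θ : ℝ≥0∞) (hθ0 : θ ≠ 0) (hθt : θ ≠ ⊤)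
    (hE : ∫⁻ x in B, ∫⁻ z in B, edist (u x) (u z) ^ q ∂μ ∂μ ≤ θ * μ B * μ B) :
    ∃ y : Y, ∫⁻ z in B, edist (u z) y ^ q ∂μ ≤ 2 * θ * μ B := by
  by_contra hcon
  push Not at hcon
  have h1 : 2 * θ * μ B * μ B ≤ θ * μ B * μ B := by
    calc 2 * θ * μ B * μ B = ∫⁻ x in B, 2 * θ * μ B ∂μ := by rw [setLIntegral_const]
      _ ≤ ∫⁻ x in B, ∫⁻ z in B, edist (u x) (u z) ^ q ∂μ ∂μ := by
        apply setLIntegral_mono' hB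
        intro x _
        have := (hcon (u x)).le
        simpa only [edist_comm] using this
      _ ≤ _ := hE
  have hn0 : θ * μ B * μ B ≠ 0 := mul_ne_zero (mul_ne_zero hθ0 h0) h0
  have hnt : θ * μ B * μ B ≠ ⊤ := ENNReal.mul_ne_top (ENNReal.mul_ne_top hθt ht) ht
  have h2 : 2 * θ * μ B * μ B = θ * μ B * μ B + θ * μ B * μ B := by ring
  rw [h2] at h1
  exact absurd h1 (not_le.mpr (ENNReal.lt_add_right hnt hn0))

lemma aux_point {X Y : Type*} [MetricSpace X] [MeasurableSpace X] [BorelSpace X]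
    [MetricSpace Y] [MeasurableSpace Y] [BorelSpace Y] [CompleteSpace Y]
    (μ : Measure X) (s q c C T γ : ℝ) (hc : 0 < c) (hC : 0 < C) (hq : 0 < q) (hγ : q < γ)
    (hb : ∀ (x : X) (ρ : ℝ), 0 < ρ → ρ ≤ T →
      ENNReal.ofReal (c * ρ ^ s) ≤ μ (closedBall x ρ) ∧
      μ (closedBall x ρ) ≤ ENNReal.ofReal (C * ρ ^ s))
    (u : X → Y) (hu : Measurable u) (k0 : ℕ) (hk0 : 1 ≤ k0) (hkT : (1/2 : ℝ) ^ k0 ≤ T) (a : X)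
    (hE : ∀ k ≥ k0, ∫⁻ x in closedBall a ((1/2 : ℝ) ^ k), ∫⁻ z in closedBall a ((1/2 : ℝ) ^ k),
        edist (u x) (u z) ^ q ∂μ ∂μ
      ≤ ENNReal.ofReal ((k : ℝ) ^ (-γ)) * μ (closedBall a ((1/2 : ℝ) ^ k))
        * μ (closedBall a ((1/2 : ℝ) ^ k))) :
    ∃ y : Y, Tendsto (fun ε : ℝ =>
          (μ (closedBall a ε))⁻¹ * ∫⁻ z in closedBall a ε, edist (u z) y ^ q ∂μ)
        (𝓝[>] (0 : ℝ)) (𝓝 0) := by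
  set B : ℕ → Set X := fun k => closedBall a ((1/2 : ℝ) ^ k) with hBdef
  set θ : ℕ → ℝ≥0∞ := fun k => ENNReal.ofReal ((k : ℝ) ^ (-γ)) with hθ
  have hBm : ∀ k, MeasurableSet (B k) := fun k => measurableSet_closedBall
  have hpow : ∀ k ≥ k0, (1/2 : ℝ) ^ k ≤ T := fun k hk =>
    (pow_le_pow_of_le_one (by norm_num) (by norm_num) hk).trans hkT
  have hball0 : ∀ ρ : ℝ, 0 < ρ → ρ ≤ T → μ (closedBall a ρ) ≠ 0 := by
    intro ρ h1 h2
    have : 0 < ENNReal.ofReal (c * ρ ^ s) := by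
      rw [ENNReal.ofReal_pos]; positivity
    exact (this.trans_le (hb a ρ h1 h2).1).ne'
  have hballt : ∀ ρ : ℝ, 0 < ρ → ρ ≤ T → μ (closedBall a ρ) ≠ ⊤ := fun ρ h1 h2 =>
    ((hb a ρ h1 h2).2.trans_lt ENNReal.ofReal_lt_top).ne
  have hB0 : ∀ k ≥ k0, μ (B k) ≠ 0 := fun k hk => hball0 _ (by positivity) (hpow k hk)
  have hBt : ∀ k ≥ k0, μ (B k) ≠ ⊤ := fun k hk => hballt _ (by positivity) (hpow k hk)
  set L : ℝ≥0∞ := ENNReal.ofReal (C * 2 ^ s / c) with hL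
  have hLt : L ≠ ⊤ := ENNReal.ofReal_ne_top
  have hdbl : ∀ k ≥ k0, μ (B k) ≤ L * μ (B (k+1)) := by
    intro k hk
    have h1 := (hb a ((1/2 : ℝ) ^ k) (by positivity) (hpow k hk)).2
    have h2 := (hb a ((1/2 : ℝ) ^ (k+1)) (by positivity) (hpow (k+1) (by omega))).1
    calc μ (B k) ≤ ENNReal.ofReal (C * ((1/2 : ℝ) ^ k) ^ s) := h1
      _ = L * ENNReal.ofReal (c * ((1/2 : ℝ) ^ (k+1)) ^ s) := by
        rw [hL, ← ENNReal.ofReal_mul (by positivity)]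
        congr 1
        rw [pow_succ, Real.mul_rpow (by positivity) (by positivity)]
        have : (2:ℝ) ^ s * (1/2 : ℝ) ^ s = 1 := by
          rw [← Real.mul_rpow (by norm_num) (by norm_num)]; norm_num
        field_simp
        linear_combination (-1 : ℝ) * this
      _ ≤ L * μ (B (k+1)) := by gcongr
  have hθ0 : ∀ k ≥ k0, θ k ≠ 0 := by
    intro k hk
    have : (0:ℝ) < k := by exact_mod_cast (by omega : 0 < k)
    have : 0 < θ k := by rw [hθ]; simp only [ENNReal.ofReal_pos]; positivity
    exact this.ne'
  have hex : ∀ k, ∃ y : Y, k0 ≤ k → ∫⁻ z in B k, edist (u z) y ^ q ∂μ ≤ 2 * θ k * μ (B k) := by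
    intro k
    by_cases hk : k0 ≤ k
    · obtain ⟨y, hy⟩ := aux_choose μ q u (B k) (hBm k) (hB0 k hk) (hBt k hk) (θ k) (hθ0 k hk)
        ENNReal.ofReal_ne_top (hE k hk)
      exact ⟨y, fun _ => hy⟩
    · exact ⟨u a, fun h => absurd h hk⟩
  choose y hy using hex
  have hmeas : ∀ w : Y, Measurable (fun z => edist (u z) w ^ q) := by
    intro w
    have : Measurable (fun v : Y => edist v w) := (continuous_id.edist continuous_const).measurable
    exact (this.comp hu).pow_const q
  have hθmono : ∀ k ≥ k0, θ (k+1) ≤ θ k := by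
    intro k hk
    apply ENNReal.ofReal_le_ofReal
    have : (0:ℝ) < k := by exact_mod_cast (by omega : 0 < k)
    apply Real.rpow_le_rpow_of_nonpos this (by push_cast; linarith) (by linarith)
  set K : ℝ≥0∞ := 2 ^ q * (2 * L + 2) with hK
  have hKt : K ≠ ⊤ := by
    rw [hK]
    exact ENNReal.mul_ne_top (ENNReal.rpow_ne_top_of_nonneg hq.le (by simp))
      (ENNReal.add_ne_top.mpr ⟨ENNReal.mul_ne_top (by simp) hLt, by simp⟩)
  have hstep : ∀ k ≥ k0, edist (y k) (y (k+1)) ^ q ≤ K * θ k := by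
    intro k hk
    have hk1 : k0 ≤ k + 1 := by omega
    have hsub : B (k+1) ⊆ B k := closedBall_subset_closedBall
      (pow_le_pow_of_le_one (by norm_num) (by norm_num) (Nat.le_succ k))
    have h1 : edist (y k) (y (k+1)) ^ q * μ (B (k+1)) ≤ K * θ k * μ (B (k+1)) := by
      calc edist (y k) (y (k+1)) ^ q * μ (B (k+1))
          = ∫⁻ z in B (k+1), edist (y k) (y (k+1)) ^ q ∂μ := by rw [setLIntegral_const]
        _ ≤ ∫⁻ z in B (k+1), 2 ^ q * (edist (u z) (y k) ^ q + edist (u z) (y (k+1)) ^ q) ∂μ := by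
          apply lintegral_mono
          intro z
          refine (ENNReal.rpow_le_rpow (edist_triangle_left (y k) (y (k+1)) (u z)) hq.le).trans ?_
          exact aux_add_rpow q hq _ _
        _ = 2 ^ q * ((∫⁻ z in B (k+1), edist (u z) (y k) ^ q ∂μ) +
              ∫⁻ z in B (k+1), edist (u z) (y (k+1)) ^ q ∂μ) := by
          rw [lintegral_const_mul' _ _ (ENNReal.rpow_ne_top_of_nonneg hq.le (by simp)), lintegral_add_left (hmeas _)]
        _ ≤ 2 ^ q * (2 * θ k * (L * μ (B (k+1))) + 2 * θ k * μ (B (k+1))) := by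
          gcongr
          · calc _ ≤ ∫⁻ z in B k, edist (u z) (y k) ^ q ∂μ := lintegral_mono_set hsub
              _ ≤ 2 * θ k * μ (B k) := hy k hk
              _ ≤ _ := by gcongr; exact hdbl k hk
          · calc _ ≤ 2 * θ (k+1) * μ (B (k+1)) := hy (k+1) hk1
              _ ≤ _ := by gcongr; exact hθmono k hk
        _ = K * θ k * μ (B (k+1)) := by rw [hK]; ring
    exact (ENNReal.mul_le_mul_iff_left (hB0 _ hk1) (hBt _ hk1)).mp h1
  have hdist : ∀ k ≥ k0, edist (y k) (y (k+1)) ≤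
      K ^ (1/q) * ENNReal.ofReal ((k : ℝ) ^ (-(γ/q))) := by
    intro k hk
    have hkp : (0:ℝ) < k := by exact_mod_cast (by omega : 0 < k)
    have h1 := ENNReal.rpow_le_rpow (hstep k hk) (by positivity : 0 ≤ 1/q)
    rw [← ENNReal.rpow_mul, mul_one_div_cancel hq.ne', ENNReal.rpow_one,
      ENNReal.mul_rpow_of_nonneg _ _ (by positivity)] at h1
    refine h1.trans (le_of_eq ?_)
    congr 1
    rw [hθ]; simp only
    rw [ENNReal.ofReal_rpow_of_nonneg (by positivity) (by positivity), ← Real.rpow_mul hkp.le]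
    congr 2; field_simp
  have hsum : ∑' n : ℕ, K ^ (1/q) * ENNReal.ofReal (((n + k0 : ℕ) : ℝ) ^ (-(γ/q))) ≠ ⊤ := by
    rw [ENNReal.tsum_mul_left]
    apply ENNReal.mul_ne_top (ENNReal.rpow_ne_top_of_nonneg (by positivity) hKt)
    apply Summable.tsum_ofReal_ne_top
    refine (summable_nat_add_iff (f := fun n : ℕ => (n : ℝ) ^ (-(γ/q))) k0).mpr ?_
    rw [Real.summable_nat_rpow]
    have : 1 < γ / q := by rw [lt_div_iff₀ hq]; linarith
    linarith
  have hcau : CauchySeq (fun n => y (n + k0)) := by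
    refine cauchySeq_of_edist_le_of_tsum_ne_top _ (fun n => ?_) hsum
    have := hdist (n + k0) (by omega)
    rw [show n + k0 + 1 = n.succ + k0 by omega] at this
    exact this
  obtain ⟨w, hw⟩ := cauchySeq_tendsto_of_complete hcau
  have hw' : Tendsto y atTop (𝓝 w) := (tendsto_add_atTop_iff_nat k0).mp hw
  refine ⟨w, ?_⟩
  set η : ℕ → ℝ≥0∞ := fun k => L * (2 ^ q * (2 * θ k + edist (y k) w ^ q)) with hη
  have hη0 : Tendsto η atTop (𝓝 0) := by
    have e1 : Tendsto θ atTop (𝓝 0) := by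
      rw [hθ, ← ENNReal.ofReal_zero]
      apply (ENNReal.continuous_ofReal.tendsto _).comp
      exact (tendsto_rpow_neg_atTop (by linarith : 0 < γ)).comp tendsto_natCast_atTop_atTop
    have e2 : Tendsto (fun k => edist (y k) w ^ q) atTop (𝓝 0) := by
      have := tendsto_iff_edist_tendsto_0.mp hw'
      have h3 := (ENNReal.continuous_rpow_const (y := q)).tendsto 0 |>.comp this
      rwa [ENNReal.zero_rpow_of_pos hq] at h3
    have e3 : Tendsto (fun k => 2 * θ k + edist (y k) w ^ q) atTop (𝓝 (2 * 0 + 0)) :=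
      (ENNReal.Tendsto.const_mul e1 (Or.inr (by simp))).add e2
    have e4 := ENNReal.Tendsto.const_mul (a := L) (ENNReal.Tendsto.const_mul (a := 2 ^ q) e3
      (Or.inr (ENNReal.rpow_ne_top_of_nonneg hq.le (by simp)))) (Or.inr hLt)
    simpa using e4
  have hint : ∀ k ≥ k0, ∫⁻ z in B k, edist (u z) w ^ q ∂μ
      ≤ 2 ^ q * (2 * θ k + edist (y k) w ^ q) * μ (B k) := by
    intro k hk
    calc ∫⁻ z in B k, edist (u z) w ^ q ∂μ
        ≤ ∫⁻ z in B k, 2 ^ q * (edist (u z) (y k) ^ q + edist (y k) w ^ q) ∂μ := by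
          apply lintegral_mono
          intro z
          refine (ENNReal.rpow_le_rpow (edist_triangle (u z) (y k) w) hq.le).trans ?_
          exact aux_add_rpow q hq _ _
      _ = 2 ^ q * ((∫⁻ z in B k, edist (u z) (y k) ^ q ∂μ) + edist (y k) w ^ q * μ (B k)) := by
          rw [lintegral_const_mul' _ _ (ENNReal.rpow_ne_top_of_nonneg hq.le (by simp)),
            lintegral_add_left (hmeas _), setLIntegral_const]
      _ ≤ 2 ^ q * (2 * θ k * μ (B k) + edist (y k) w ^ q * μ (B k)) := by
          gcongr; exact hy k hk
      _ = _ := by ring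
  rw [ENNReal.tendsto_nhds_zero]
  intro δ hδ
  have hev := (ENNReal.tendsto_nhds_zero.mp hη0) δ hδ
  obtain ⟨k1, hk1⟩ := eventually_atTop.mp hev
  set m := max k0 k1 with hm
  have hmem : Ioo (0:ℝ) ((1/2 : ℝ) ^ m) ∈ 𝓝[>] (0:ℝ) := Ioo_mem_nhdsGT (by positivity)
  filter_upwards [hmem] with ε hε
  obtain ⟨hε0, hε1⟩ := hε
  obtain ⟨n, hn1, hn2⟩ := exists_nat_pow_near_of_lt_one (x := ε) (y := (1/2 : ℝ)) hε0
    (hε1.le.trans (pow_le_one₀ (by norm_num) (by norm_num))) (by norm_num) (by norm_num)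
  have hnm : m ≤ n := by
    by_contra hlt
    push Not at hlt
    have := pow_le_pow_of_le_one (a := (1/2 : ℝ)) (by norm_num) (by norm_num)
      (show n + 1 ≤ m by omega)
    linarith
  have hnk0 : n ≥ k0 := (le_max_left _ _).trans hnm
  have hnk1 : n ≥ k1 := (le_max_right _ _).trans hnm
  have hεT : ε ≤ T := hn2.trans (hpow n hnk0)
  have hs1 : closedBall a ε ⊆ B n := closedBall_subset_closedBall hn2
  have hs2 : B (n+1) ⊆ closedBall a ε := closedBall_subset_closedBall hn1.le
  have hfin : ∫⁻ z in closedBall a ε, edist (u z) w ^ q ∂μ ≤ η n * μ (closedBall a ε) := by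
    calc _ ≤ ∫⁻ z in B n, edist (u z) w ^ q ∂μ := lintegral_mono_set hs1
      _ ≤ _ := hint n hnk0
      _ ≤ 2 ^ q * (2 * θ n + edist (y n) w ^ q) * (L * μ (closedBall a ε)) := by
        gcongr
        exact (hdbl n hnk0).trans (by gcongr)
      _ = η n * μ (closedBall a ε) := by rw [hη]; ring
  calc (μ (closedBall a ε))⁻¹ * ∫⁻ z in closedBall a ε, edist (u z) w ^ q ∂μ
      ≤ (μ (closedBall a ε))⁻¹ * (η n * μ (closedBall a ε)) := by gcongr
    _ = η n * ((μ (closedBall a ε))⁻¹ * μ (closedBall a ε)) := by ring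
    _ = η n := by rw [ENNReal.inv_mul_cancel (hball0 ε hε0 hεT) (hballt ε hε0 hεT), mul_one]
    _ ≤ δ := hk1 n hnk1


lemma aux_glog (σ β d : ℝ) (hσ : 0 ≤ σ) (hβ : 0 < β) (hd0 : 0 < d) (hd1 : d < 1) (D : ℝ≥0∞)
    (hD : D ≤ ENNReal.ofReal d) :
    glogE σ β D ≤ ENNReal.ofReal (d ^ σ / |Real.log d| ^ β) := by
  have hDt : D ≠ ⊤ := (hD.trans_lt ENNReal.ofReal_lt_top).ne
  have hD1 : D ≠ 1 := by
    have : D < 1 := hD.trans_lt (by rw [← ENNReal.ofReal_one]; exact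
      (ENNReal.ofReal_lt_ofReal_iff one_pos).mpr hd1)
    exact this.ne
  unfold glogE
  by_cases h0 : D = 0
  · simp [h0]
  rw [if_neg h0, if_neg hD1, if_neg hDt]
  apply ENNReal.ofReal_le_ofReal
  have hx0 : 0 < D.toReal := ENNReal.toReal_pos h0 hDt
  have hxd : D.toReal ≤ d := ENNReal.toReal_le_of_le_ofReal hd0.le hD
  have hl1 : Real.log d < 0 := Real.log_neg hd0 hd1
  have hl2 : Real.log D.toReal ≤ Real.log d := Real.log_le_log hx0 hxd
  have hl : |Real.log d| ≤ |Real.log D.toReal| := by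
    rw [abs_of_neg hl1, abs_of_neg (hl2.trans_lt hl1)]; linarith
  have hp : 0 < |Real.log d| := abs_pos.mpr hl1.ne
  gcongr

lemma aux_cover {X Y : Type*} [MetricSpace X] [MeasurableSpace X] [BorelSpace X]
    [MetricSpace Y] (μ : Measure X) (s r q c C T γ β : ℝ) (hc : 0 < c) (hC : 0 < C)
    (hrq : r * q ≤ s) (hβ : 0 < β)
    (hb : ∀ (x : X) (ρ : ℝ), 0 < ρ → ρ ≤ T →
      ENNReal.ofReal (c * ρ ^ s) ≤ μ (closedBall x ρ) ∧
      μ (closedBall x ρ) ≤ ENNReal.ofReal (C * ρ ^ s))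
    (u : X → Y) (M : ℝ) (hM0 : 0 ≤ M)
    (hM : ∀ t : ℝ, 0 < t → ∫⁻ x, (ENNReal.ofReal t ^ (r * q))⁻¹ *
      ((μ (closedBall x t))⁻¹ * ∫⁻ z in closedBall x t, edist (u x) (u z) ^ q ∂μ) ∂μ
        ≤ ENNReal.ofReal M)
    (k : ℕ) (hk : 8 ≤ k) (hkT : 2 * (1/2 : ℝ) ^ k ≤ T) :
    ∃ w : ℕ → Set X,
      {a : X | ENNReal.ofReal ((k : ℝ) ^ (-γ)) * μ (closedBall a ((1/2 : ℝ) ^ k))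
          * μ (closedBall a ((1/2 : ℝ) ^ k)) <
        ∫⁻ x in closedBall a ((1/2 : ℝ) ^ k), ∫⁻ z in closedBall a ((1/2 : ℝ) ^ k),
        edist (u x) (u z) ^ q ∂μ ∂μ} ⊆ ⋃ n, w n ∧
      (∀ n, EMetric.diam (w n) ≤ ENNReal.ofReal (10 * (1/2 : ℝ) ^ k)) ∧
      ∑' n, glogE (s - r * q) β (EMetric.diam (w n)) ≤
        ENNReal.ofReal ((2 ^ (r * q + s) * C * M / c ^ 2 * 10 ^ (s - r * q) *
          (2 / Real.log 2) ^ β) * (k : ℝ) ^ (γ - β)) := by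
  set t : ℝ := (1/2 : ℝ) ^ k with htdef
  have ht : 0 < t := by positivity
  have hkp : (0:ℝ) < k := by exact_mod_cast (by omega : 0 < k)
  set G := {a : X | ENNReal.ofReal ((k : ℝ) ^ (-γ)) * μ (closedBall a t) * μ (closedBall a t) <
        ∫⁻ x in closedBall a t, ∫⁻ z in closedBall a t, edist (u x) (u z) ^ q ∂μ ∂μ} with hG
  set σ := s - r * q with hσ
  have hσ0 : 0 ≤ σ := by rw [hσ]; linarith
  set K1 : ℝ := 2 ^ (r * q + s) * C * M / c ^ 2 with hK1
  have hK10 : 0 ≤ K1 := by positivity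
  have hcard : ∀ F : Finset X, (F : Set X) ⊆ G →
      (F : Set X).PairwiseDisjoint (fun a => closedBall a t) →
      (F.card : ℝ) ≤ K1 * (k : ℝ) ^ γ * t ^ (-σ) := by
    intro F hFG hFd
    have h1 := aux_energy μ s r q c C T hc hb u _ hM t ht hkT F hFd
    have h2 : ∑ a ∈ F, ENNReal.ofReal ((k : ℝ) ^ (-γ) * (c * t ^ s) * (c * t ^ s)) ≤
        ∑ a ∈ F, ∫⁻ x in closedBall a t, ∫⁻ z in closedBall a t, edist (u x) (u z) ^ q ∂μ ∂μ := by
      apply Finset.sum_le_sum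
      intro a ha
      refine le_trans ?_ (hFG ha).le
      have hba := (hb a t ht (by linarith)).1
      rw [ENNReal.ofReal_mul (by positivity), ENNReal.ofReal_mul (by positivity)]
      gcongr
    have h3 := h2.trans h1
    rw [Finset.sum_const, nsmul_eq_mul, ENNReal.ofReal_rpow_of_pos (by positivity),
      ← ENNReal.ofReal_mul (by positivity), ← ENNReal.ofReal_mul (by positivity),
      ← ENNReal.ofReal_natCast, ← ENNReal.ofReal_mul (by positivity),
      ENNReal.ofReal_le_ofReal_iff (by positivity)] at h3
    have e1 : (k : ℝ) ^ γ * (k : ℝ) ^ (-γ) = 1 := by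
      rw [← Real.rpow_add hkp]; simp
    have e2 : t ^ (-σ) * t ^ s = t ^ (r * q) := by
      rw [← Real.rpow_add ht]; congr 1; rw [hσ]; ring
    have e3 : (2 * t) ^ (r * q) = 2 ^ (r * q) * t ^ (r * q) :=
      Real.mul_rpow (by norm_num) ht.le
    have e4 : (2 * t) ^ s = 2 ^ s * t ^ s := Real.mul_rpow (by norm_num) ht.le
    have e5 : (2:ℝ) ^ (r * q + s) = 2 ^ (r * q) * 2 ^ s := Real.rpow_add (by norm_num) _ _
    have hpos : 0 < (k : ℝ) ^ (-γ) * (c * t ^ s) * (c * t ^ s) := by positivity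
    refine le_of_mul_le_mul_right (h3.trans (le_of_eq ?_)) hpos
    calc (2 * t) ^ (r * q) * (C * (2 * t) ^ s) * M
        = (2 ^ (r * q) * 2 ^ s) * C * M * (t ^ (r*q)) * t ^ s := by rw [e3, e4]; ring
      _ = (2 ^ (r * q) * 2 ^ s) * C * M / c ^ 2 * ((k : ℝ) ^ γ * (k : ℝ) ^ (-γ))
            * (t ^ (-σ) * t ^ s) * t ^ s * c ^ 2 := by
          rw [e1, e2]; field_simp
      _ = _ := by rw [hK1, e5]; ring
  obtain ⟨U, hUG, hUd, hUc⟩ := Vitali.exists_disjoint_subfamily_covering_enlargement_closedBall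
    G (fun a => a) (fun _ => t) t (fun _ _ => le_rfl) 5 (by norm_num)
  have hUfin : U.Finite := by
    by_contra hinf
    obtain ⟨n, hn⟩ := exists_nat_gt (K1 * (k : ℝ) ^ γ * t ^ (-σ))
    obtain ⟨F, hF, hFn⟩ := Set.Infinite.exists_subset_card_eq hinf n
    have := hcard F (hF.trans hUG) (hUd.subset hF)
    rw [hFn] at this
    linarith
  set F := hUfin.toFinset with hF
  have hFU : (F : Set X) = U := hUfin.coe_toFinset
  have hFc := hcard F (by rw [hFU]; exact hUG) (by rw [hFU]; exact hUd)
  set e := F.equivFin with he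
  set w : ℕ → Set X := fun n => if h : n < F.card then
    closedBall ((e.symm ⟨n, h⟩ : F) : X) (5 * t) else ∅ with hw
  have hwd : ∀ n, EMetric.diam (w n) ≤ ENNReal.ofReal (10 * t) := by
    intro n
    change Metric.ediam (w n) ≤ _
    simp only [hw]
    split_ifs with h
    · refine Metric.ediam_le fun x hx y hy => ?_
      rw [edist_dist]
      apply ENNReal.ofReal_le_ofReal
      rw [mem_closedBall] at hx hy
      have := dist_triangle_right x y ((e.symm ⟨n, h⟩ : F) : X)
      linarith
    · simp
  refine ⟨w, ?_, hwd, ?_⟩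
  · intro a ha
    obtain ⟨b, hbU, hbs⟩ := hUc a ha
    have hbF : b ∈ F := by rw [hF]; simpa using hbU
    have ham := hbs (mem_closedBall_self ht.le)
    refine mem_iUnion.mpr ⟨(e ⟨b, hbF⟩ : ℕ), ?_⟩
    simp only [hw]
    rw [dif_pos (e ⟨b, hbF⟩).2]
    simpa using ham
  · set d : ℝ := 10 * t with hd
    have hd0 : 0 < d := by positivity
    have hlog2 : 0 < Real.log 2 := Real.log_pos (by norm_num)
    have hlog10 : Real.log 10 < 4 * Real.log 2 := by
      have : Real.log ((2:ℝ) ^ 4) = 4 * Real.log 2 := by rw [Real.log_pow]; norm_num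
      rw [← this]; exact Real.log_lt_log (by norm_num) (by norm_num)
    have hlogd : Real.log d = Real.log 10 - k * Real.log 2 := by
      rw [hd, htdef, Real.log_mul (by norm_num) (by positivity), Real.log_pow, one_div,
        Real.log_inv]; ring
    have hk8 : (8:ℝ) ≤ k := by exact_mod_cast hk
    have hlogd2 : Real.log d ≤ -((k / 2) * Real.log 2) := by
      rw [hlogd]; nlinarith
    have hlogneg : Real.log d < 0 := by
      have : 0 < (k / 2 : ℝ) * Real.log 2 := by positivity
      linarith
    have hd1 : d < 1 := by
      by_contra h
      push Not at h
      have := Real.log_nonneg h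
      linarith
    have hg : ∀ n, glogE σ β (EMetric.diam (w n)) ≤
        if n < F.card then ENNReal.ofReal (d ^ σ / |Real.log d| ^ β) else 0 := by
      intro n
      split_ifs with h
      · exact aux_glog σ β d hσ0 hβ hd0 hd1 _ (hwd n)
      · have : w n = ∅ := by simp only [hw]; rw [dif_neg h]
        rw [this]
        change glogE σ β (Metric.ediam ∅) ≤ 0
        simp [glogE]
    refine (ENNReal.tsum_le_tsum hg).trans ?_
    have hsum : ∑' n : ℕ, (if n < F.card then ENNReal.ofReal (d ^ σ / |Real.log d| ^ β) else 0)
        = F.card * ENNReal.ofReal (d ^ σ / |Real.log d| ^ β) := by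
      rw [tsum_eq_sum (s := Finset.range F.card)]
      · rw [Finset.sum_congr rfl (g := fun _ => ENNReal.ofReal (d ^ σ / |Real.log d| ^ β))]
        · simp
        · intro n hn
          rw [if_pos (Finset.mem_range.mp hn)]
      · intro n hn
        rw [if_neg (by simpa using hn)]
    rw [hsum, ← ENNReal.ofReal_natCast, ← ENNReal.ofReal_mul (by positivity)]
    apply ENNReal.ofReal_le_ofReal
    have hlb : (k / 2 * Real.log 2 : ℝ) ≤ |Real.log d| := by
      rw [abs_of_neg hlogneg]; linarith
    calc (F.card : ℝ) * (d ^ σ / |Real.log d| ^ β)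
        ≤ (K1 * (k : ℝ) ^ γ * t ^ (-σ)) * (d ^ σ / (k / 2 * Real.log 2 : ℝ) ^ β) := by
          gcongr
      _ = (K1 * 10 ^ σ * (2 / Real.log 2) ^ β) * (k : ℝ) ^ (γ - β) := by
          have e1 : d ^ σ = 10 ^ σ * t ^ σ := Real.mul_rpow (by norm_num) ht.le
          have e2 : t ^ (-σ) * t ^ σ = 1 := by rw [← Real.rpow_add ht]; simp
          have e3 : (k / 2 * Real.log 2 : ℝ) = k / (2 / Real.log 2) := by field_simp
          have e4 : (k / (2 / Real.log 2) : ℝ) ^ β = (k:ℝ) ^ β / (2 / Real.log 2) ^ β :=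
            Real.div_rpow hkp.le (by positivity) _
          have e5 : (k : ℝ) ^ (γ - β) = (k : ℝ) ^ γ / (k : ℝ) ^ β := Real.rpow_sub hkp _ _
          rw [e3, e4, e1, e5]
          have hp : 0 < (2 / Real.log 2 : ℝ) ^ β := by positivity
          have hp2 : 0 < (k : ℝ) ^ β := by positivity
          calc K1 * (k:ℝ) ^ γ * t ^ (-σ) * (10 ^ σ * t ^ σ / ((k:ℝ) ^ β / (2 / Real.log 2) ^ β))
              = K1 * (k:ℝ) ^ γ * (t ^ (-σ) * t ^ σ) * (10 ^ σ / ((k:ℝ) ^ β / (2 / Real.log 2) ^ β)) := by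
                ring
            _ = _ := by rw [e2]; field_simp

lemma aux_dim {X : Type*} [MetricSpace X] [MeasurableSpace X] [BorelSpace X] (σ β : ℝ)
    (hσ : 0 ≤ σ) (N : Set X) (h : logHausdorff σ β N = 0) :
    dimH N ≤ ENNReal.ofReal σ := by
  apply dimH_le
  intro d' hd'
  by_contra hlt
  push Not at hlt
  have hσd : σ < d' := by
    have : ENNReal.ofReal σ < ENNReal.ofReal (d' : ℝ) := by simpa using hlt
    exact (ENNReal.ofReal_lt_ofReal_iff_of_nonneg hσ).mp this
  have hd0 : (0:ℝ) < d' := hσ.trans_lt hσd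
  have hev := (isLittleO_abs_log_rpow_rpow_nhdsGT_zero (s := σ - d') β (by linarith)).bound one_pos
  obtain ⟨δ0, hδ0, hδ⟩ := mem_nhdsGT_iff_exists_Ioo_subset.mp hev
  have hδ0 : (0:ℝ) < δ0 := hδ0
  set δ1 := min δ0 1 / 2 with hδ1
  have hδ1p : 0 < δ1 := by positivity
  have hδ1a : δ1 < δ0 := by
    have : min δ0 1 ≤ δ0 := min_le_left _ _
    rw [hδ1]; linarith
  have hδ1b : δ1 < 1 := by
    have : min δ0 1 ≤ 1 := min_le_right _ _
    rw [hδ1]; linarith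
  have hcomp : ∀ D : ℝ≥0∞, D ≤ ENNReal.ofReal δ1 → D ^ (d' : ℝ) ≤ glogE σ β D := by
    intro D hD
    by_cases h0 : D = 0
    · rw [h0, ENNReal.zero_rpow_of_pos hd0]; exact zero_le
    have hDt : D ≠ ⊤ := (hD.trans_lt ENNReal.ofReal_lt_top).ne
    have hD1 : D ≠ 1 := by
      have : D < 1 := hD.trans_lt (by rw [← ENNReal.ofReal_one]; exact
        (ENNReal.ofReal_lt_ofReal_iff one_pos).mpr hδ1b)
      exact this.ne
    unfold glogE
    rw [if_neg h0, if_neg hD1, if_neg hDt]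
    have hx0 : 0 < D.toReal := ENNReal.toReal_pos h0 hDt
    have hxd : D.toReal ≤ δ1 := ENNReal.toReal_le_of_le_ofReal hδ1p.le hD
    have hb := hδ ⟨hx0, hxd.trans_lt hδ1a⟩
    simp only [mem_ofPred_eq, one_mul] at hb
    rw [Real.norm_of_nonneg (by positivity), Real.norm_of_nonneg (by positivity)] at hb
    have hl : 0 < |Real.log D.toReal| := abs_pos.mpr (Real.log_neg hx0 (by linarith)).ne
    conv_lhs => rw [← ENNReal.ofReal_toReal hDt, ENNReal.ofReal_rpow_of_pos hx0]
    apply ENNReal.ofReal_le_ofReal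
    rw [le_div_iff₀ (by positivity)]
    calc D.toReal ^ (d':ℝ) * |Real.log D.toReal| ^ β
        ≤ D.toReal ^ (d':ℝ) * D.toReal ^ (σ - d') := by gcongr
      _ = D.toReal ^ σ := by rw [← Real.rpow_add hx0]; congr 1; ring
  have hz : Measure.hausdorffMeasure (d' : ℝ) N = 0 := by
    rw [Measure.hausdorffMeasure_apply]
    simp only [ENNReal.iSup_eq_zero]
    intro R hR
    obtain ⟨R', hR'0, hR'⟩ : ∃ R' : ℝ, 0 < R' ∧ ENNReal.ofReal R' ≤ R := by
      by_cases hRt : R = ⊤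
      · exact ⟨1, one_pos, by simp [hRt]⟩
      · exact ⟨R.toReal, ENNReal.toReal_pos hR.ne' hRt, by rw [ENNReal.ofReal_toReal hRt]⟩
    have h1 : ∀ δ : ℝ, 0 < δ → (⨅ (t : ℕ → Set X) (_ : N ⊆ ⋃ n, t n)
      (_ : ∀ n, EMetric.diam (t n) ≤ ENNReal.ofReal δ),
      ∑' n, glogE σ β (EMetric.diam (t n))) = 0 := by
      unfold logHausdorff at h
      simp only [ENNReal.iSup_eq_zero] at h
      exact h
    have h2 := h1 (min R' δ1) (lt_min hR'0 hδ1p)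
    refine le_antisymm ?_ zero_le
    rw [← h2]
    refine le_iInf fun t => le_iInf fun ht => le_iInf fun htd => ?_
    refine iInf_le_of_le t (iInf_le_of_le ht (iInf_le_of_le (fun n => ?_) ?_))
    · exact (htd n).trans ((ENNReal.ofReal_le_ofReal (min_le_left _ _)).trans hR')
    · refine ENNReal.tsum_le_tsum fun n => iSup_le fun _ => ?_
      exact hcomp _ ((htd n).trans (ENNReal.ofReal_le_ofReal (min_le_right _ _)))
  rw [hz] at hd'
  exact ENNReal.zero_ne_top hd'

lemma aux_logH {X : Type*} [MetricSpace X] (σ β : ℝ) (N : Set X) (G : ℕ → Set X) (k1 : ℕ)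
    (hNG : ∀ m, k1 ≤ m → N ⊆ ⋃ k, G (k + m)) (f : ℕ → ℝ≥0∞) (hf : ∑' n, f n ≠ ⊤)
    (hw : ∀ k ≥ k1, ∃ w : ℕ → Set X, G k ⊆ ⋃ n, w n ∧
      (∀ n, EMetric.diam (w n) ≤ ENNReal.ofReal (10 * (1/2 : ℝ) ^ k)) ∧
      ∑' n, glogE σ β (EMetric.diam (w n)) ≤ f k) :
    logHausdorff σ β N = 0 := by
  unfold logHausdorff
  simp only [ENNReal.iSup_eq_zero]
  intro δ hδ
  have hlim := ENNReal.tendsto_sum_nat_add f hf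
  have hpow : Tendsto (fun k : ℕ => 10 * (1/2 : ℝ) ^ k) atTop (𝓝 (10 * 0)) :=
    (tendsto_pow_atTop_nhds_zero_of_lt_one (by norm_num) (by norm_num)).const_mul 10
  rw [mul_zero] at hpow
  refine le_antisymm (ge_of_tendsto hlim ?_) zero_le
  filter_upwards [eventually_ge_atTop k1, hpow.eventually (gt_mem_nhds hδ)] with m hm hmδ
  have hw' : ∀ k, ∃ w : ℕ → Set X, G (k + m) ⊆ ⋃ n, w n ∧
      (∀ n, EMetric.diam (w n) ≤ ENNReal.ofReal (10 * (1/2 : ℝ) ^ (k + m))) ∧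
      ∑' n, glogE σ β (EMetric.diam (w n)) ≤ f (k + m) := fun k => hw (k + m) (by omega)
  choose w hw1 hw2 hw3 using hw'
  set W : ℕ → Set X := fun n => w (Nat.unpair n).1 (Nat.unpair n).2 with hW
  refine iInf_le_of_le W (iInf_le_of_le ?_ (iInf_le_of_le ?_ ?_))
  · intro x hx
    obtain ⟨k, hk⟩ := mem_iUnion.mp (hNG m hm hx)
    obtain ⟨n, hn⟩ := mem_iUnion.mp (hw1 k hk)
    exact mem_iUnion.mpr ⟨Nat.pair k n, by simpa [hW] using hn⟩
  · intro n
    refine (hw2 _ _).trans (ENNReal.ofReal_le_ofReal (le_trans ?_ hmδ.le))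
    have := pow_le_pow_of_le_one (a := (1/2 : ℝ)) (by norm_num) (by norm_num)
      (show m ≤ (Nat.unpair n).1 + m by omega)
    linarith
  · have h1 : ∑' n, glogE σ β (EMetric.diam (W n)) =
        ∑' p : ℕ × ℕ, glogE σ β (EMetric.diam (w p.1 p.2)) := by
      rw [← Nat.pairEquiv.tsum_eq]
      refine tsum_congr fun p => ?_
      have hp : Nat.unpair (Nat.pairEquiv p) = p := Nat.pairEquiv.symm_apply_apply p
      simp only [hW, hp]
    rw [h1, ENNReal.tsum_prod (f := fun a b => glogE σ β (EMetric.diam (w a b)))]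
    exact ENNReal.tsum_le_tsum hw3

/-- Lebesgue points of Besov functions with complete target: the set `N` of
non-Lebesgue points is `Λ^{s-rq,β}`-null for every `β > q + 1`; every point outside
`N` is a Lebesgue point, and the Hausdorff dimension of `N` is at most `s - rq`. -/
theorem statement18 {X Y : Type*} [MetricSpace X] [MeasurableSpace X] [BorelSpace X]
    [MetricSpace Y] [MeasurableSpace Y] [BorelSpace Y] [CompleteSpace Y]
    (μ : Measure X) (s r q : ℝ) (hs : 0 < s)
    (hμ : IsAhlfors μ s) (hr0 : 0 ≤ r) (hr1 : r ≤ 1) (hq : 0 < q) (hrq : r * q ≤ s)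
    (u : X → Y) (hu : MemBesov μ r q u)
    (N : Set X)
    (hN : N = {x : X | ∀ y : Y, 0 < limsup (fun ε : ℝ =>
        (μ (closedBall x ε))⁻¹ * ∫⁻ z in closedBall x ε, edist (u z) y ^ q ∂μ)
        (𝓝[>] (0 : ℝ))})
    (β : ℝ) (hβ : q + 1 < β) :
    logHausdorff (s - r * q) β N = 0 ∧
    (∀ x ∉ N, ∃ ustar : Y,
      Tendsto (fun ε : ℝ =>
          (μ (closedBall x ε))⁻¹ * ∫⁻ z in closedBall x ε, edist (u z) ustar ^ q ∂μ)
        (𝓝[>] (0 : ℝ)) (𝓝 0)) ∧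
    dimH N ≤ ENNReal.ofReal (s - r * q) := by
  have hq1 : ∀ x ∉ N, ∃ ustar : Y,
      Tendsto (fun ε : ℝ =>
          (μ (closedBall x ε))⁻¹ * ∫⁻ z in closedBall x ε, edist (u z) ustar ^ q ∂μ)
        (𝓝[>] (0 : ℝ)) (𝓝 0) := by
    intro x hx
    rw [hN] at hx
    simp only [mem_ofPred_eq, not_forall, not_lt] at hx
    obtain ⟨y, hy⟩ := hx
    exact ⟨y, tendsto_of_le_liminf_of_limsup_le zero_le hy⟩
  have hnotN : ∀ x (y : Y), Tendsto (fun ε : ℝ =>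
          (μ (closedBall x ε))⁻¹ * ∫⁻ z in closedBall x ε, edist (u z) y ^ q ∂μ)
        (𝓝[>] (0 : ℝ)) (𝓝 0) → x ∉ N := by
    intro x y hy hx
    rw [hN] at hx
    have := hx y
    rw [hy.limsup_eq] at this
    exact lt_irrefl _ this
  have hmain : logHausdorff (s - r * q) β N = 0 := by
    obtain ⟨c, C, hc, hC, hA⟩ := hμ
    obtain ⟨hum, -, hsup⟩ := hu
    by_cases hD : EMetric.diam (Set.univ : Set X) = 0
    · have hsub : ∀ x y : X, x = y := by
        intro x y
        have h1 : edist x y ≤ Metric.ediam (Set.univ : Set X) :=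
          Metric.edist_le_ediam_of_mem (mem_univ x) (mem_univ y)
        have h2 : edist x y ≤ 0 := h1.trans_eq hD
        exact edist_le_zero.mp h2
      have hNe : ∀ x, x ∉ N := by
        intro x
        apply hnotN x (u x)
        have : (fun ε : ℝ => (μ (closedBall x ε))⁻¹ *
            ∫⁻ z in closedBall x ε, edist (u z) (u x) ^ q ∂μ) = fun _ => 0 := by
          funext ε
          have : ∀ z, edist (u z) (u x) ^ q = 0 := by
            intro z; rw [hsub z x, edist_self, ENNReal.zero_rpow_of_pos hq]
          simp [this]
        rw [this]
        exact tendsto_const_nhds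
      refine aux_logH _ β N (fun _ => ∅) 0 (fun m _ x hx => absurd hx (hNe x)) (fun _ => 0)
        (by simp) (fun k _ => ⟨fun _ => ∅, by simp, ?_, ?_⟩)
      · intro n
        change Metric.ediam ∅ ≤ _
        simp
      · change ∑' n : ℕ, glogE _ β (Metric.ediam ∅) ≤ _
        simp [glogE]
    · obtain ⟨T, hT0, hT⟩ : ∃ T : ℝ, 0 < T ∧ ENNReal.ofReal T < EMetric.diam (Set.univ : Set X) := by
        obtain ⟨T, h1, h2⟩ := ENNReal.lt_iff_exists_nnreal_btwn.mp (pos_iff_ne_zero.mpr hD)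
        exact ⟨T, by exact_mod_cast h1, by simpa using h2⟩
      have hb : ∀ (x : X) (ρ : ℝ), 0 < ρ → ρ ≤ T →
          ENNReal.ofReal (c * ρ ^ s) ≤ μ (closedBall x ρ) ∧
          μ (closedBall x ρ) ≤ ENNReal.ofReal (C * ρ ^ s) := fun x ρ h1 h2 =>
        hA x ρ h1 ((ENNReal.ofReal_le_ofReal h2).trans_lt hT)
      set S := (⨆ (t : ℝ) (_ : 0 < t),
        ∫⁻ x, (ENNReal.ofReal t ^ (r * q))⁻¹ *
        ((μ (closedBall x t))⁻¹ * ∫⁻ z in closedBall x t, edist (u x) (u z) ^ q ∂μ) ∂μ) with hS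
      have hM : ∀ t : ℝ, 0 < t → ∫⁻ x, (ENNReal.ofReal t ^ (r * q))⁻¹ *
          ((μ (closedBall x t))⁻¹ * ∫⁻ z in closedBall x t, edist (u x) (u z) ^ q ∂μ) ∂μ
          ≤ ENNReal.ofReal S.toReal := by
        intro t ht
        rw [ENNReal.ofReal_toReal hsup.ne, hS]
        exact le_iSup₂ (f := fun (t : ℝ) (_ : 0 < t) =>
          ∫⁻ x, (ENNReal.ofReal t ^ (r * q))⁻¹ *
          ((μ (closedBall x t))⁻¹ * ∫⁻ z in closedBall x t, edist (u x) (u z) ^ q ∂μ) ∂μ) t ht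
      obtain ⟨γ, hγ1, hγ2⟩ := exists_between (show q < β - 1 by linarith)
      obtain ⟨j, hj⟩ := exists_pow_lt_of_lt_one (show 0 < T / 2 by linarith)
        (show (1/2 : ℝ) < 1 by norm_num)
      set k1 := max 8 j with hk1
      have hkT : ∀ k ≥ k1, 2 * (1/2 : ℝ) ^ k ≤ T := by
        intro k hk
        have := pow_le_pow_of_le_one (a := (1/2 : ℝ)) (by norm_num) (by norm_num)
          ((le_max_right 8 j).trans hk)
        linarith
      set G : ℕ → Set X := fun k =>
        {a : X | ENNReal.ofReal ((k : ℝ) ^ (-γ)) * μ (closedBall a ((1/2 : ℝ) ^ k))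
          * μ (closedBall a ((1/2 : ℝ) ^ k)) <
        ∫⁻ x in closedBall a ((1/2 : ℝ) ^ k), ∫⁻ z in closedBall a ((1/2 : ℝ) ^ k),
        edist (u x) (u z) ^ q ∂μ ∂μ} with hG
      refine aux_logH (s - r * q) β N G k1 ?_ (fun k => ENNReal.ofReal
        ((2 ^ (r * q + s) * C * S.toReal / c ^ 2 * 10 ^ (s - r * q) *
          (2 / Real.log 2) ^ β) * (k : ℝ) ^ (γ - β))) ?_ ?_
      · intro m hm x hx
        by_contra hcon
        have h8 : 8 ≤ m := (le_max_left 8 j).trans hm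
        obtain ⟨y, hy⟩ := aux_point μ s q c C T γ hc hC hq hγ1 hb u hum m (by omega)
          (by have := hkT m hm; have : (0:ℝ) < (1/2 : ℝ) ^ m := by positivity
              linarith) x (by
            intro k hk
            by_contra hlt
            push Not at hlt
            apply hcon
            refine mem_iUnion.mpr ⟨k - m, ?_⟩
            rw [Nat.sub_add_cancel hk]
            exact hlt)
        exact hnotN x y hy hx
      · apply Summable.tsum_ofReal_ne_top
        apply Summable.mul_left
        rw [Real.summable_nat_rpow]
        linarith
      · intro k hk
        exact aux_cover μ s r q c C T γ β hc hC hrq (by linarith) hb u S.toReal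
          ENNReal.toReal_nonneg hM k ((le_max_left 8 j).trans hk) (hkT k hk)
  exact ⟨hmain, hq1, aux_dim _ β (by linarith) N hmain⟩
end

section
/- Let X be a metric space, μ an Ahlfors s-regular measure on X for some s ∈ (0,∞) with lower regularity constant c, (Y,ρ) a metric space, 0 < r < 1 and 0 < q < ∞. Then W^{r,q}(X,μ;Y) ⊂ B^r_{q,∞}(X,μ;Y); more precisely, for every μ-measurable u : X → Y and every t > 0, ∫_X ⨍_{B_t(x)} ρ(u(x),u(z))^q / t^{rq} dμ(z) dμ(x) ≤ (1/c) ∬_{X×X} ρ(u(x),u(z))^q / d(x,z)^{rq+s} d(μ×μ)(x,z), so that ‖u‖_{B^r_{q,∞}(X,μ;Y)}^q ≤ (1/c) ‖u‖_{W^{r,q}(X,μ;Y)}^q. -/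
open MeasureTheory Metric Filter Set
open scoped ENNReal Topology

/-- `W^{r,q}(X,μ;Y) ⊆ B^r_{q,∞}(X,μ;Y)`: for an Ahlfors `s`-regular measure with lower
constant `c`, the Besov energy at every scale `t > 0` is dominated by `1/c` times the
fractional Sobolev energy; hence `‖u‖_{B^r_{q,∞}}^q ≤ (1/c) ‖u‖_{W^{r,q}}^q`. -/
theorem statement19 {X Y : Type*} [MetricSpace X] [MeasurableSpace X] [BorelSpace X]
    [MetricSpace Y] [MeasurableSpace Y] [BorelSpace Y]
    (μ : Measure X) (s : ℝ) (hs : 0 < s)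
    (c C : ℝ) (hc : 0 < c) (hC : 0 < C)
    (hAhl : ∀ (x : X) (ρ : ℝ), 0 < ρ →
      ENNReal.ofReal ρ < EMetric.diam (Set.univ : Set X) →
      ENNReal.ofReal (c * ρ ^ s) ≤ μ (closedBall x ρ) ∧
        μ (closedBall x ρ) ≤ ENNReal.ofReal (C * ρ ^ s))
    (r q : ℝ) (hr0 : 0 < r) (hr1 : r < 1) (hq : 0 < q)
    (u : X → Y) (hu : Measurable u) :
    (∀ t : ℝ, 0 < t →
      ∫⁻ x, (ENNReal.ofReal t ^ (r * q))⁻¹ *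
          ((μ (closedBall x t))⁻¹ * ∫⁻ z in closedBall x t, edist (u x) (u z) ^ q ∂μ) ∂μ
        ≤ (ENNReal.ofReal c)⁻¹ *
          ∫⁻ x, ∫⁻ z, edist (u x) (u z) ^ q / edist x z ^ (r * q + s) ∂μ ∂μ) ∧
    (⨆ (t : ℝ) (_ : 0 < t),
      ∫⁻ x, (ENNReal.ofReal t ^ (r * q))⁻¹ *
          ((μ (closedBall x t))⁻¹ * ∫⁻ z in closedBall x t, edist (u x) (u z) ^ q ∂μ) ∂μ)
        ≤ (ENNReal.ofReal c)⁻¹ *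
          ∫⁻ x, ∫⁻ z, edist (u x) (u z) ^ q / edist x z ^ (r * q + s) ∂μ ∂μ := by
  have key : ∀ (t : ℝ), 0 < t → ∀ x z : X, z ∈ closedBall x t → x ≠ z →
      (ENNReal.ofReal t ^ (r * q))⁻¹ * (μ (closedBall x t))⁻¹
        ≤ (ENNReal.ofReal c)⁻¹ * (edist x z ^ (r * q + s))⁻¹ := by
    intro t ht x z hz hxz
    have hd : 0 < dist x z := dist_pos.mpr hxz
    have hdt : dist x z ≤ t := by rw [dist_comm]; exact hz
    have hrq : 0 < r * q := mul_pos hr0 hq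
    have hball : ENNReal.ofReal (c * dist x z ^ s) ≤ μ (closedBall x t) := by
      have hcont : Tendsto (fun ρ : ℝ => ENNReal.ofReal (c * ρ ^ s)) (𝓝[<] (dist x z))
          (𝓝 (ENNReal.ofReal (c * dist x z ^ s))) := by
        have h1 : Tendsto (fun ρ : ℝ => c * ρ ^ s) (𝓝 (dist x z))
            (𝓝 (c * dist x z ^ s)) :=
          ((Real.continuousAt_rpow_const _ _ (Or.inl hd.ne')).tendsto).const_mul c
        exact (ENNReal.tendsto_ofReal h1).mono_left nhdsWithin_le_nhds
      refine le_of_tendsto hcont ?_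
      filter_upwards [Ioo_mem_nhdsLT hd] with ρ hρ
      refine (hAhl x ρ hρ.1 ?_).1.trans (measure_mono (closedBall_subset_closedBall
        (hρ.2.le.trans hdt)))
      refine lt_of_lt_of_le ?_ (Metric.edist_le_ediam_of_mem (mem_univ x) (mem_univ z))
      rw [edist_dist]
      exact (ENNReal.ofReal_lt_ofReal_iff hd).mpr hρ.2
    have hpos : ENNReal.ofReal (dist x z) ≠ 0 := by simpa using hxz
    rw [edist_dist, ENNReal.rpow_add _ _ hpos ENNReal.ofReal_ne_top,
      ENNReal.mul_inv (Or.inr (ENNReal.rpow_ne_top_of_nonneg hs.le ENNReal.ofReal_ne_top))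
        (Or.inl (ENNReal.rpow_ne_top_of_nonneg hrq.le ENNReal.ofReal_ne_top)),
      mul_left_comm]
    refine mul_le_mul' ?_ ?_
    · exact ENNReal.inv_le_inv.mpr
        (ENNReal.rpow_le_rpow (ENNReal.ofReal_le_ofReal hdt) hrq.le)
    · rw [← ENNReal.mul_inv (Or.inl (by simpa using hc))
        (Or.inl ENNReal.ofReal_ne_top)]
      refine ENNReal.inv_le_inv.mpr ?_
      rwa [ENNReal.ofReal_rpow_of_pos hd, ← ENNReal.ofReal_mul hc.le]
  have hcinv : (ENNReal.ofReal c)⁻¹ ≠ ⊤ := by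
    simpa using hc
  have main : ∀ t : ℝ, 0 < t →
      ∫⁻ x, (ENNReal.ofReal t ^ (r * q))⁻¹ *
          ((μ (closedBall x t))⁻¹ * ∫⁻ z in closedBall x t, edist (u x) (u z) ^ q ∂μ) ∂μ
        ≤ (ENNReal.ofReal c)⁻¹ *
          ∫⁻ x, ∫⁻ z, edist (u x) (u z) ^ q / edist x z ^ (r * q + s) ∂μ ∂μ := by
    intro t ht
    rw [← lintegral_const_mul' _ _ hcinv]
    refine lintegral_mono fun x => ?_
    simp only
    rw [← lintegral_const_mul' _ _ hcinv, ← mul_assoc]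
    refine (lintegral_const_mul_le _ _).trans ?_
    refine le_trans ?_ (setLIntegral_le_lintegral (closedBall x t) _)
    refine setLIntegral_mono' measurableSet_closedBall fun z hz => ?_
    by_cases hxz : x = z
    · subst hxz
      simp [ENNReal.zero_rpow_of_pos hq]
    · calc _ ≤ ((ENNReal.ofReal c)⁻¹ * (edist x z ^ (r * q + s))⁻¹) * edist (u x) (u z) ^ q :=
            mul_le_mul_left (key t ht x z hz hxz) _
        _ = _ := by rw [div_eq_mul_inv]; ring
  exact ⟨main, iSup₂_le main⟩
end
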